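/- arXiv:2309.02336 — 13 statements merged into one kernel-verified Lean document; each statement's English description precedes it below -/
import Mathlib

section
/- Let g ≥ 1 and let (P,Q,R) ∈ ℂ[x]³ satisfy the M_g constraints, and suppose the triplet is regular, i.e. 2p₁ − q₁ + r₁ ≠ 0, where p₁, q₁, r₁ denote the coefficients of x in P, Q, R respectively. Set w := −(2p₁ − q₁ + r₁)/2, so w ≠ 0. Then the polynomial 2P − Q + R is divisible by x, and the polynomials P̃ := Q − P, Q̃ := (2P − Q + R)/(−w·x), R̃ := −w·x·Q again satisfy the M_g constraints and P̃² + Q̃·R̃ = P² + Q·R. Moreover, (w, P̃, Q̃, R̃) is the unique tuple with w ∈ ℂ∖{0} and (P̃,Q̃,R̃) satisfying the M_g constraints such that P̃ = Q − P, −w·x·Q̃ = 2P − Q + R and R̃ = −w·x·Q. -/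
/-- The `M_g` constraints on a triplet of complex polynomials:
`deg P ≤ g`, `deg Q ≤ g`, `deg R ≤ g+1`, `P(0) = 1`, `Q(0) = 2`, `R(0) = 0`. -/
def MgConstraints (g : ℕ) (P Q R : Polynomial ℂ) : Prop :=
  P.natDegree ≤ g ∧ Q.natDegree ≤ g ∧ R.natDegree ≤ g + 1 ∧
    P.eval 0 = 1 ∧ Q.eval 0 = 2 ∧ R.eval 0 = 0

/-!
With `S = 2P - Q + R`, the identity `(Q - P)² + S Q = P² + Q R` shows that every factorization
`S = (-w x) Q̃` yields a triplet with the same `P² + Q R`. The prescribed values at `0` make `S`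
vanish there, so such factorizations exist for all `w ≠ 0`, and comparing coefficients of `x` shows
that `Q̃(0) = 2` exactly when `-2w` is the coefficient of `x` in `S`.
-/

open Polynomial

section Factorization

variable {K : Type*}

theorem coeff_one_C_mul_X_mul [Semiring K] (a : K) (q : K[X]) :
    (C a * X * q).coeff 1 = a * q.eval 0 := by
  rw [mul_assoc, coeff_C_mul, coeff_X_mul, coeff_zero_eq_eval_zero]

theorem natDegree_C_mul_X_mul_le [Semiring K] (a : K) (q : K[X]) :
    (C a * X * q).natDegree ≤ q.natDegree + 1 := by
  have hX : (X * q).natDegree ≤ 1 + q.natDegree := natDegree_mul_le_of_le natDegree_X_le le_rfl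
  rw [mul_assoc, add_comm]
  exact (natDegree_C_mul_le _ _).trans hX

theorem natDegree_C_mul_X_mul [Semiring K] [IsDomain K] {a : K} (ha : a ≠ 0) {q : K[X]}
    (hq : q ≠ 0) : (C a * X * q).natDegree = q.natDegree + 1 := by
  rw [mul_assoc, natDegree_C_mul ha, natDegree_X_mul hq]

theorem C_mul_X_mul_C_inv_mul_divX [Field K] {a : K} (ha : a ≠ 0) {p : K[X]}
    (hp : p.coeff 0 = 0) : C a * X * (C a⁻¹ * p.divX) = p :=
  calc
    C a * X * (C a⁻¹ * p.divX) = C (a * a⁻¹) * (X * p.divX + C (p.coeff 0)) := by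
      rw [hp, C_0, C_mul]; ring
    _ = p := by rw [mul_inv_cancel₀ ha, C_1, one_mul, X_mul_divX_add]

theorem eq_and_eq_of_C_mul_X_mul_eq [Ring K] [IsDomain K] {a b : K} {q r : K[X]}
    (hb : b ≠ 0) (hr : r.eval 0 ≠ 0) (hqr : q.eval 0 = r.eval 0)
    (h : C a * X * q = C b * X * r) : a = b ∧ q = r := by
  have hab : a = b := by
    have hcoeff := congrArg (coeff · 1) h
    simp only [coeff_one_C_mul_X_mul, hqr] at hcoeff
    exact mul_right_cancel₀ hr hcoeff
  subst hab
  exact ⟨rfl, mul_left_cancel₀ (mul_ne_zero (C_ne_zero.mpr hb) X_ne_zero) h⟩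

end Factorization

theorem sub_sq_add_mul_mul_eq {A : Type*} [CommRing A] {P Q R Q' v : A}
    (h : v * Q' = 2 * P - Q + R) : (Q - P) ^ 2 + Q' * (v * Q) = P ^ 2 + Q * R := by
  linear_combination Q * h

/-- The `M_g` constraints over an arbitrary coefficient semiring; over `ℂ` they are
`MgConstraints`. -/
structure IsMgTriplet {K : Type*} [Semiring K] (g : ℕ) (P Q R : K[X]) : Prop where
  natDegree_first_le : P.natDegree ≤ g
  natDegree_second_le : Q.natDegree ≤ g
  natDegree_third_le : R.natDegree ≤ g + 1
  eval_zero_first : P.eval 0 = 1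
  eval_zero_second : Q.eval 0 = 2
  eval_zero_third : R.eval 0 = 0

theorem mgConstraints_iff_isMgTriplet {g : ℕ} {P Q R : ℂ[X]} :
    MgConstraints g P Q R ↔ IsMgTriplet g P Q R :=
  ⟨fun ⟨hP, hQ, hR, hP0, hQ0, hR0⟩ ↦ ⟨hP, hQ, hR, hP0, hQ0, hR0⟩,
    fun ⟨hP, hQ, hR, hP0, hQ0, hR0⟩ ↦ ⟨hP, hQ, hR, hP0, hQ0, hR0⟩⟩

namespace IsMgTriplet

variable {K : Type*} [CommRing K] {g : ℕ} {P Q R : K[X]}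

theorem coeff_zero_two_mul_sub_add (h : IsMgTriplet g P Q R) :
    (2 * P - Q + R).coeff 0 = 0 := by
  simp [coeff_zero_eq_eval_zero, h.eval_zero_first, h.eval_zero_second, h.eval_zero_third]

theorem natDegree_two_mul_sub_add_le (h : IsMgTriplet g P Q R) :
    (2 * P - Q + R).natDegree ≤ g + 1 := by
  have hP : (2 * P).natDegree ≤ g := by
    rw [← C_ofNat]
    exact (natDegree_C_mul_le _ _).trans h.natDegree_first_le
  exact natDegree_add_le_of_degree_le
    ((natDegree_sub_le_of_le hP h.natDegree_second_le).trans (by omega)) h.natDegree_third_le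

theorem of_C_mul_X_mul_eq [IsDomain K] {v : K} {Q' : K[X]} (h : IsMgTriplet g P Q R)
    (hv : v ≠ 0) (hcoeff : (2 * P - Q + R).coeff 1 = v * 2)
    (hQ' : C v * X * Q' = 2 * P - Q + R) :
    IsMgTriplet g (Q - P) Q' (C v * X * Q) where
  natDegree_first_le := by
    simpa using natDegree_sub_le_of_le h.natDegree_second_le h.natDegree_first_le
  natDegree_second_le := by
    rcases eq_or_ne Q' 0 with rfl | hne
    · simp
    · have hdeg := h.natDegree_two_mul_sub_add_le
      rw [← hQ', natDegree_C_mul_X_mul hv hne] at hdeg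
      exact Nat.le_of_succ_le_succ hdeg
  natDegree_third_le :=
    (natDegree_C_mul_X_mul_le v Q).trans (Nat.succ_le_succ h.natDegree_second_le)
  eval_zero_first := by
    rw [eval_sub, h.eval_zero_second, h.eval_zero_first]
    norm_num
  eval_zero_second := by
    rw [← hQ', coeff_one_C_mul_X_mul] at hcoeff
    exact mul_left_cancel₀ hv hcoeff
  eval_zero_third := by simp

end IsMgTriplet

theorem stmt0_general {K : Type*} [Field K] [NeZero (2 : K)] {g : ℕ} {P Q R : K[X]}
    (hM : IsMgTriplet g P Q R) (hreg : 2 * P.coeff 1 - Q.coeff 1 + R.coeff 1 ≠ 0)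
    {w : K} (hw : w = -(2 * P.coeff 1 - Q.coeff 1 + R.coeff 1) / 2)
    {Pt Qt Rt : K[X]} (hPt : Pt = Q - P) (hQt : Qt = C (-w)⁻¹ * (2 * P - Q + R).divX)
    (hRt : Rt = C (-w) * X * Q) :
    w ≠ 0 ∧
    X ∣ 2 * P - Q + R ∧
    C (-w) * X * Qt = 2 * P - Q + R ∧
    IsMgTriplet g Pt Qt Rt ∧
    Pt ^ 2 + Qt * Rt = P ^ 2 + Q * R ∧
    ∀ (w' : K) (P' Q' R' : K[X]), Q'.eval 0 = 2 → P' = Q - P →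
      C (-w') * X * Q' = 2 * P - Q + R → R' = C (-w') * X * Q →
      w' = w ∧ P' = Pt ∧ Q' = Qt ∧ R' = Rt := by
  have h2 : (2 : K) ≠ 0 := two_ne_zero
  have hw0 : w ≠ 0 := hw ▸ div_ne_zero (neg_ne_zero.mpr hreg) h2
  have hv : -w ≠ 0 := neg_ne_zero.mpr hw0
  have hcoeff : (2 * P - Q + R).coeff 1 = -w * 2 := by
    rw [coeff_add, coeff_sub, coeff_ofNat_mul, hw]
    field_simp
  have hfactor : C (-w) * X * Qt = 2 * P - Q + R :=
    hQt ▸ C_mul_X_mul_C_inv_mul_divX hv hM.coeff_zero_two_mul_sub_add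
  have hMt : IsMgTriplet g Pt Qt Rt :=
    hPt ▸ hRt ▸ hM.of_C_mul_X_mul_eq hv hcoeff hfactor
  refine ⟨hw0, X_dvd_iff.mpr hM.coeff_zero_two_mul_sub_add, hfactor, hMt,
    hPt ▸ hRt ▸ sub_sq_add_mul_mul_eq hfactor, ?_⟩
  intro w' P' Q' R' hQ'0 hP' hQ' hR'
  obtain ⟨hneg, rfl⟩ := eq_and_eq_of_C_mul_X_mul_eq hv (hMt.eval_zero_second ▸ h2)
    (hQ'0.trans hMt.eval_zero_second.symm) (hQ'.trans hfactor.symm)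
  obtain rfl := neg_injective hneg
  exact ⟨rfl, hP'.trans hPt.symm, rfl, hR'.trans hRt.symm⟩

theorem stmt0 (g : ℕ) (hg : 1 ≤ g) (P Q R : Polynomial ℂ)
    (hM : MgConstraints g P Q R)
    (hreg : 2 * P.coeff 1 - Q.coeff 1 + R.coeff 1 ≠ 0)
    (w : ℂ) (hw : w = -(2 * P.coeff 1 - Q.coeff 1 + R.coeff 1) / 2)
    (Pt Qt Rt : Polynomial ℂ)
    (hPt : Pt = Q - P)
    (hQt : Qt = Polynomial.C (-w)⁻¹ * (2 * P - Q + R).divX)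
    (hRt : Rt = Polynomial.C (-w) * Polynomial.X * Q) :
    w ≠ 0 ∧
    Polynomial.X ∣ (2 * P - Q + R) ∧
    Polynomial.C (-w) * Polynomial.X * Qt = 2 * P - Q + R ∧
    MgConstraints g Pt Qt Rt ∧
    Pt ^ 2 + Qt * Rt = P ^ 2 + Q * R ∧
    (∀ w' : ℂ, ∀ P' Q' R' : Polynomial ℂ, w' ≠ 0 → MgConstraints g P' Q' R' →
      P' = Q - P →
      Polynomial.C (-w') * Polynomial.X * Q' = 2 * P - Q + R →
      R' = Polynomial.C (-w') * Polynomial.X * Q →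
      w' = w ∧ P' = Pt ∧ Q' = Qt ∧ R' = Rt) := by
  simp only [mgConstraints_iff_isMgTriplet] at hM ⊢
  obtain ⟨hw0, hdvd, hfactor, hMt, hinv, huniq⟩ := stmt0_general hM hreg hw hPt hQt hRt
  exact ⟨hw0, hdvd, hfactor, hMt, hinv,
    fun w' P' Q' R' _ hM' ↦ huniq w' P' Q' R' hM'.eval_zero_second⟩
end

section
/- Let g ≥ 1 and let (P,Q,R) ∈ ℂ[x]³ satisfy the M_g constraints with 2p₁ − q₁ + r₁ ≠ 0 (p₁,q₁,r₁ the coefficients of x in P,Q,R), set w := −(2p₁ − q₁ + r₁)/2 and let (P̃,Q̃,R̃) be the image under the Volterra step. Then the 2×2 matrices over ℂ[x] given by L := [[P, R],[Q, −P]], L̃ := [[P̃, R̃],[Q̃, −P̃]] and M := [[1, −w·x],[1, 0]] satisfy the discrete Lax equation L·M = M·L̃; consequently det L̃ = det L, i.e. P̃² + Q̃·R̃ = P² + Q·R, so that all 2g+1 coefficients H₁,…,H_{2g+1} defined by P(x)² + Q(x)R(x) = 1 + Σ_{i=1}^{2g+1} H_i x^i are invariants of the Volterra step. -/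
/-!
Write `u = -w x`. The matrix `M` factors as a constant unimodular matrix times `diag(1, u)`.
Conjugating `L` by the constant factor gives a traceless matrix whose lower left entry
`2P - Q + R = u Q̃` is divisible by `u`; intertwining with `diag(1, u)` moves this factor `u` to the
upper right entry. Neither operation changes the determinant, the second one because only the
product of the two off-diagonal entries enters it.
-/

/-- The traceless `2 × 2` Lax matrix `L` of a triplet `(p, q, r)`: note that `q` is the lower left
entry and `r` the upper right one. -/
def laxMatrix {A : Type*} [CommRing A] (p q r : A) : Matrix (Fin 2) (Fin 2) A :=
  !![p, r; q, -p]

/-- The constant unimodular factor of the intertwiner `M` of the Volterra step. -/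
def gaugeMatrix (A : Type*) [CommRing A] : Matrix (Fin 2) (Fin 2) A :=
  !![1, 1; 1, 0]

/-- The intertwiner `M` of the discrete Lax equation, with an arbitrary ring element `u` in place
of `-w x`. -/
def volterraMatrix {A : Type*} [CommRing A] (u : A) : Matrix (Fin 2) (Fin 2) A :=
  !![1, u; 1, 0]

theorem det_eq_of_mul_eq_mul {n A : Type*} [Fintype n] [DecidableEq n] [CommRing A]
    {L M L' : Matrix n n A} (hM : IsLeftRegular M.det) (h : L * M = M * L') :
    L.det = L'.det := by
  apply hM
  calc M.det * L.det = (L * M).det := by rw [Matrix.det_mul, mul_comm]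
    _ = M.det * L'.det := by rw [h, Matrix.det_mul]

section LaxMatrix

variable {A : Type*} [CommRing A]

theorem det_laxMatrix (p q r : A) : (laxMatrix p q r).det = -(p ^ 2 + q * r) := by
  rw [laxMatrix, Matrix.det_fin_two_of]
  ring

theorem isUnit_det_gaugeMatrix : IsUnit (gaugeMatrix A).det := by
  simp [gaugeMatrix]

theorem volterraMatrix_eq_gaugeMatrix_mul_diagonal (u : A) :
    volterraMatrix u = gaugeMatrix A * Matrix.diagonal ![1, u] := by
  ext i j
  fin_cases i <;> fin_cases j <;> simp [volterraMatrix, gaugeMatrix]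

theorem laxMatrix_mul_gaugeMatrix (p q r : A) :
    laxMatrix p q r * gaugeMatrix A =
      gaugeMatrix A * laxMatrix (q - p) (2 * p - q + r) q := by
  simp only [laxMatrix, gaugeMatrix, Matrix.mul_fin_two]
  congr! 3 <;> ring_nf

theorem laxMatrix_mul_diagonal (u p q r : A) :
    laxMatrix p (u * q) r * Matrix.diagonal ![1, u] =
      Matrix.diagonal ![1, u] * laxMatrix p q (u * r) := by
  ext i j
  fin_cases i <;> fin_cases j <;> simp [laxMatrix, mul_comm]

theorem det_laxMatrix_gauge (p q r : A) :
    (laxMatrix (q - p) (2 * p - q + r) q).det = (laxMatrix p q r).det :=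
  (det_eq_of_mul_eq_mul isUnit_det_gaugeMatrix.isRegular.left
    (laxMatrix_mul_gaugeMatrix p q r)).symm

theorem det_laxMatrix_mul_left_right (u p q r : A) :
    (laxMatrix p (u * q) r).det = (laxMatrix p q (u * r)).det := by
  rw [det_laxMatrix, det_laxMatrix, mul_left_comm q u r, mul_assoc]

theorem laxMatrix_mul_volterraMatrix {u p q r q' : A} (hq' : u * q' = 2 * p - q + r) :
    laxMatrix p q r * volterraMatrix u = volterraMatrix u * laxMatrix (q - p) q' (u * q) := by
  rw [volterraMatrix_eq_gaugeMatrix_mul_diagonal]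
  calc laxMatrix p q r * (gaugeMatrix A * Matrix.diagonal ![1, u])
      = gaugeMatrix A * (laxMatrix (q - p) (u * q') q * Matrix.diagonal ![1, u]) := by
        rw [← mul_assoc, laxMatrix_mul_gaugeMatrix, hq', mul_assoc]
    _ = gaugeMatrix A * Matrix.diagonal ![1, u] * laxMatrix (q - p) q' (u * q) := by
        rw [laxMatrix_mul_diagonal, mul_assoc]

theorem det_laxMatrix_volterra {u p q r q' : A} (hq' : u * q' = 2 * p - q + r) :
    (laxMatrix (q - p) q' (u * q)).det = (laxMatrix p q r).det := by
  rw [← det_laxMatrix_mul_left_right, hq', det_laxMatrix_gauge]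

theorem stmt1_general (u p q r p' q' r' : A) (hp' : p' = q - p)
    (hq' : u * q' = 2 * p - q + r) (hr' : r' = u * q) :
    laxMatrix p q r * volterraMatrix u = volterraMatrix u * laxMatrix p' q' r' ∧
      (laxMatrix p' q' r').det = (laxMatrix p q r).det ∧
      p' ^ 2 + q' * r' = p ^ 2 + q * r := by
  subst hp' hr'
  have hdet := det_laxMatrix_volterra hq'
  refine ⟨laxMatrix_mul_volterraMatrix hq', hdet, ?_⟩
  rwa [det_laxMatrix, det_laxMatrix, neg_inj] at hdet

end LaxMatrix

theorem stmt1 (g : ℕ) (hg : 1 ≤ g) (P Q R : Polynomial ℂ)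
    (hM : MgConstraints g P Q R)
    (hreg : 2 * P.coeff 1 - Q.coeff 1 + R.coeff 1 ≠ 0)
    (w : ℂ) (hw : w = -(2 * P.coeff 1 - Q.coeff 1 + R.coeff 1) / 2)
    (Pt Qt Rt : Polynomial ℂ)
    (hPt : Pt = Q - P)
    (hQt : Polynomial.C (-w) * Polynomial.X * Qt = 2 * P - Q + R)
    (hRt : Rt = Polynomial.C (-w) * Polynomial.X * Q) :
    -- the discrete Lax equation L · M = M · L̃
    (!![P, R; Q, -P] : Matrix (Fin 2) (Fin 2) (Polynomial ℂ)) *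
        !![1, Polynomial.C (-w) * Polynomial.X; 1, 0] =
      !![1, Polynomial.C (-w) * Polynomial.X; 1, 0] * !![Pt, Rt; Qt, -Pt] ∧
    -- consequently det L̃ = det L
    (!![Pt, Rt; Qt, -Pt] : Matrix (Fin 2) (Fin 2) (Polynomial ℂ)).det =
      (!![P, R; Q, -P] : Matrix (Fin 2) (Fin 2) (Polynomial ℂ)).det ∧
    -- i.e. P̃² + Q̃·R̃ = P² + Q·R
    Pt ^ 2 + Qt * Rt = P ^ 2 + Q * R ∧
    -- so the 2g+1 coefficients H₁,…,H_{2g+1} of P² + Q·R are invariant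
    (∀ i : ℕ, 1 ≤ i → i ≤ 2 * g + 1 →
      (Pt ^ 2 + Qt * Rt).coeff i = (P ^ 2 + Q * R).coeff i) := by
  obtain ⟨lax, det_eq, inv⟩ := stmt1_general _ P Q R Pt Qt Rt hPt hQt hRt
  exact ⟨lax, det_eq, inv, fun i _ _ => congrArg (Polynomial.coeff · i) inv⟩
end

section
/- Let a, b, ν ∈ ℂ and let τ : ℤ → ℂ with τ_n ≠ 0 for all n. Define w_n := τ_n τ_{n+3} / (τ_{n+1} τ_{n+2}). Then for each n ∈ ℤ, the sequence (w_m) satisfies the (P.iv) recurrence at index n if and only if τ satisfies at index n the homogeneous recurrence of order 7 and degree 8: τ_{n+7}τ_{n+4}²τ_{n+3}³τ_{n+2}² + τ_{n+6}²τ_{n+3}⁴τ_{n+2}² + 2τ_{n+6}τ_{n+5}²τ_{n+3}²τ_{n+2}³ + τ_{n+6}τ_{n+5}τ_{n+4}²τ_{n+3}²τ_{n+2}τ_{n+1} + τ_{n+5}⁴τ_{n+2}⁴ + 2τ_{n+5}³τ_{n+4}²τ_{n+2}²τ_{n+1} + τ_{n+5}²τ_{n+4}⁴τ_{n+1}² +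 τ_{n+5}²τ_{n+4}³τ_{n+3}²τ_n + ν(τ_{n+6}τ_{n+5}τ_{n+4}τ_{n+3}³τ_{n+2}² + τ_{n+5}³τ_{n+4}τ_{n+3}τ_{n+2}³ + τ_{n+5}²τ_{n+4}³τ_{n+3}τ_{n+2}τ_{n+1}) + b·τ_{n+5}²τ_{n+4}²τ_{n+3}²τ_{n+2}² + a·τ_{n+5}τ_{n+4}³τ_{n+3}³τ_{n+2} = 0. -/
/-!
Consecutive ratios telescope: `w n * w (n + 1) = τ n * τ (n + 4) / τ (n + 2) ^ 2`. Write (P.iv) as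
`w (n + 2) * B + a = 0`, with `B` quadratic in the `w`'s, and put
`Q = τ (n + 2) * τ (n + 3) * τ (n + 4) * τ (n + 5)`. Multiplying by `Q` clears the denominators of
`w (n + 1)`, `w (n + 2)`, `w (n + 3)`, and multiplying by `Q ^ 2` clears those of `w n * w (n + 1)`
and `w (n + 3) * w (n + 4)`; hence `Q ^ 2 * B` is a polynomial in the `τ`'s. As
`D = Q ^ 2 / w (n + 2)` is the monomial `τ (n + 5) * τ (n + 4) ^ 3 * τ (n + 3) ^ 3 * τ (n + 2)`,
multiplying (P.iv) by `D` gives the recurrence for `τ`.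
-/

section CommRing

variable {R : Type*} [CommRing R]

/-- The left-hand side of the (P.iv) recurrence for the sequence `w` at index `n`. -/
def pivLHS (a b ν : R) (w : ℤ → R) (n : ℤ) : R :=
  w (n + 4) * w (n + 3) * w (n + 2) + w (n + 2) * w (n + 1) * w n
    + 2 * w (n + 2) ^ 2 * (w (n + 3) + w (n + 1))
    + w (n + 2) * (w (n + 3) ^ 2 + w (n + 3) * w (n + 1) + w (n + 1) ^ 2)
    + w (n + 2) ^ 3
    + ν * w (n + 2) * (w (n + 3) + w (n + 2) + w (n + 1))
    + b * w (n + 2) + a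

/-- The left-hand side of the homogeneous recurrence of order 7 and degree 8 for the sequence `τ`
at index `n`. -/
def tauLHS (a b ν : R) (τ : ℤ → R) (n : ℤ) : R :=
  τ (n + 7) * τ (n + 4) ^ 2 * τ (n + 3) ^ 3 * τ (n + 2) ^ 2
    + τ (n + 6) ^ 2 * τ (n + 3) ^ 4 * τ (n + 2) ^ 2
    + 2 * τ (n + 6) * τ (n + 5) ^ 2 * τ (n + 3) ^ 2 * τ (n + 2) ^ 3
    + τ (n + 6) * τ (n + 5) * τ (n + 4) ^ 2 * τ (n + 3) ^ 2 * τ (n + 2) * τ (n + 1)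
    + τ (n + 5) ^ 4 * τ (n + 2) ^ 4
    + 2 * τ (n + 5) ^ 3 * τ (n + 4) ^ 2 * τ (n + 2) ^ 2 * τ (n + 1)
    + τ (n + 5) ^ 2 * τ (n + 4) ^ 4 * τ (n + 1) ^ 2
    + τ (n + 5) ^ 2 * τ (n + 4) ^ 3 * τ (n + 3) ^ 2 * τ n
    + ν * (τ (n + 6) * τ (n + 5) * τ (n + 4) * τ (n + 3) ^ 3 * τ (n + 2) ^ 2
        + τ (n + 5) ^ 3 * τ (n + 4) * τ (n + 3) * τ (n + 2) ^ 3
        + τ (n + 5) ^ 2 * τ (n + 4) ^ 3 * τ (n + 3) * τ (n + 2) * τ (n + 1))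
    + b * τ (n + 5) ^ 2 * τ (n + 4) ^ 2 * τ (n + 3) ^ 2 * τ (n + 2) ^ 2
    + a * τ (n + 5) * τ (n + 4) ^ 3 * τ (n + 3) ^ 3 * τ (n + 2)

/-- The factor `B` in the decomposition `w (n + 2) * B + a` of the left-hand side of (P.iv). -/
def pivCofactor (b ν : R) (w : ℤ → R) (n : ℤ) : R :=
  (w (n + 1) + w (n + 2) + w (n + 3)) ^ 2 - w (n + 1) * w (n + 3)
    + w n * w (n + 1) + w (n + 3) * w (n + 4)
    + ν * (w (n + 1) + w (n + 2) + w (n + 3)) + b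

theorem pivLHS_eq_mul_pivCofactor_add (a b ν : R) (w : ℤ → R) (n : ℤ) :
    pivLHS a b ν w n = w (n + 2) * pivCofactor b ν w n + a := by
  unfold pivLHS pivCofactor
  ring

/-- The product `Q` of the four central terms of the window `τ n, …, τ (n + 7)`; multiplication by
it clears the denominators of the three central ratios. -/
def centralProd (τ : ℤ → R) (n : ℤ) : R :=
  τ (n + 2) * τ (n + 3) * τ (n + 4) * τ (n + 5)

/-- The monomial `D` by which the left-hand side of (P.iv) is multiplied to obtain the recurrence
for `τ`. -/
def clearingMonomial (τ : ℤ → R) (n : ℤ) : R :=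
  τ (n + 5) * τ (n + 4) ^ 3 * τ (n + 3) ^ 3 * τ (n + 2)

end CommRing

section Field

variable {K : Type*} [Field K]

/-- The sequence `w` attached to `τ`. It takes the junk value `0` where the denominator vanishes. -/
def tauRatio (τ : ℤ → K) (m : ℤ) : K :=
  τ m * τ (m + 3) / (τ (m + 1) * τ (m + 2))

variable {τ : ℤ → K} {n : ℤ}

theorem tauRatio_mul_tauRatio_add_one (h₁ : τ (n + 1) ≠ 0) (h₃ : τ (n + 3) ≠ 0) :
    tauRatio τ n * tauRatio τ (n + 1) = τ n * τ (n + 4) / τ (n + 2) ^ 2 := by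
  simp only [tauRatio, add_assoc, Int.reduceAdd]
  field_simp

theorem clearingMonomial_mul_tauRatio (h₃ : τ (n + 3) ≠ 0) (h₄ : τ (n + 4) ≠ 0) :
    clearingMonomial τ n * tauRatio τ (n + 2) = centralProd τ n ^ 2 := by
  simp only [clearingMonomial, centralProd, tauRatio, add_assoc, Int.reduceAdd]
  field_simp

theorem centralProd_mul_tauRatio_add_one (h₂ : τ (n + 2) ≠ 0) (h₃ : τ (n + 3) ≠ 0) :
    centralProd τ n * tauRatio τ (n + 1) = τ (n + 1) * τ (n + 4) ^ 2 * τ (n + 5) := by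
  simp only [centralProd, tauRatio, add_assoc, Int.reduceAdd]
  field_simp

theorem centralProd_mul_tauRatio_add_two (h₃ : τ (n + 3) ≠ 0) (h₄ : τ (n + 4) ≠ 0) :
    centralProd τ n * tauRatio τ (n + 2) = τ (n + 2) ^ 2 * τ (n + 5) ^ 2 := by
  simp only [centralProd, tauRatio, add_assoc, Int.reduceAdd]
  field_simp

theorem centralProd_mul_tauRatio_add_three (h₄ : τ (n + 4) ≠ 0) (h₅ : τ (n + 5) ≠ 0) :
    centralProd τ n * tauRatio τ (n + 3) = τ (n + 2) * τ (n + 3) ^ 2 * τ (n + 6) := by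
  simp only [centralProd, tauRatio, add_assoc, Int.reduceAdd]
  field_simp

theorem centralProd_sq_mul_tauRatio_mul_tauRatio_add_one
    (h₁ : τ (n + 1) ≠ 0) (h₂ : τ (n + 2) ≠ 0) (h₃ : τ (n + 3) ≠ 0) :
    centralProd τ n ^ 2 * (tauRatio τ n * tauRatio τ (n + 1)) =
      τ n * τ (n + 3) ^ 2 * τ (n + 4) ^ 3 * τ (n + 5) ^ 2 := by
  rw [tauRatio_mul_tauRatio_add_one h₁ h₃, centralProd]
  field_simp

theorem centralProd_sq_mul_tauRatio_add_three_mul_tauRatio_add_four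
    (h₄ : τ (n + 4) ≠ 0) (h₅ : τ (n + 5) ≠ 0) (h₆ : τ (n + 6) ≠ 0) :
    centralProd τ n ^ 2 * (tauRatio τ (n + 3) * tauRatio τ (n + 4)) =
      τ (n + 2) ^ 2 * τ (n + 3) ^ 3 * τ (n + 4) ^ 2 * τ (n + 7) := by
  have telescope : tauRatio τ (n + 3) * tauRatio τ (n + 4) =
      τ (n + 3) * τ (n + 7) / τ (n + 5) ^ 2 := by
    simpa only [add_assoc, Int.reduceAdd] using
      tauRatio_mul_tauRatio_add_one (τ := τ) (n := n + 3)
        (by simpa only [add_assoc, Int.reduceAdd] using h₄)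
        (by simpa only [add_assoc, Int.reduceAdd] using h₆)
  rw [telescope, centralProd]
  field_simp

theorem centralProd_sq_mul_pivCofactor_add (a b ν : K)
    (hτ : ∀ m ∈ Set.Icc (n + 1) (n + 6), τ m ≠ 0) :
    centralProd τ n ^ 2 * pivCofactor b ν (tauRatio τ) n + clearingMonomial τ n * a =
      tauLHS a b ν τ n := by
  have h₁ : τ (n + 1) ≠ 0 := hτ _ (by simp)
  have h₂ : τ (n + 2) ≠ 0 := hτ _ (by simp)
  have h₃ : τ (n + 3) ≠ 0 := hτ _ (by simp)
  have h₄ : τ (n + 4) ≠ 0 := hτ _ (by simp)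
  have h₅ : τ (n + 5) ≠ 0 := hτ _ (by simp)
  have h₆ : τ (n + 6) ≠ 0 := hτ _ (by simp)
  set Q := centralProd τ n with hQ
  set w := tauRatio τ
  calc Q ^ 2 * pivCofactor b ν w n + clearingMonomial τ n * a
    _ = (Q * w (n + 1) + Q * w (n + 2) + Q * w (n + 3)) ^ 2 - Q * w (n + 1) * (Q * w (n + 3))
          + Q ^ 2 * (w n * w (n + 1)) + Q ^ 2 * (w (n + 3) * w (n + 4))
          + ν * Q * (Q * w (n + 1) + Q * w (n + 2) + Q * w (n + 3)) + b * Q ^ 2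
          + clearingMonomial τ n * a := by
      unfold pivCofactor
      ring
    _ = tauLHS a b ν τ n := by
      rw [centralProd_mul_tauRatio_add_one h₂ h₃, centralProd_mul_tauRatio_add_two h₃ h₄,
        centralProd_mul_tauRatio_add_three h₄ h₅,
        centralProd_sq_mul_tauRatio_mul_tauRatio_add_one h₁ h₂ h₃,
        centralProd_sq_mul_tauRatio_add_three_mul_tauRatio_add_four h₄ h₅ h₆, hQ,
        centralProd, clearingMonomial, tauLHS]
      ring

theorem clearingMonomial_mul_pivLHS_tauRatio (a b ν : K)
    (hτ : ∀ m ∈ Set.Icc (n + 1) (n + 6), τ m ≠ 0) :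
    clearingMonomial τ n * pivLHS a b ν (tauRatio τ) n = tauLHS a b ν τ n := by
  have h₃ : τ (n + 3) ≠ 0 := hτ _ (by simp)
  have h₄ : τ (n + 4) ≠ 0 := hτ _ (by simp)
  rw [pivLHS_eq_mul_pivCofactor_add, mul_add, ← mul_assoc, clearingMonomial_mul_tauRatio h₃ h₄,
    centralProd_sq_mul_pivCofactor_add a b ν hτ]

theorem clearingMonomial_ne_zero (h₂ : τ (n + 2) ≠ 0) (h₃ : τ (n + 3) ≠ 0)
    (h₄ : τ (n + 4) ≠ 0) (h₅ : τ (n + 5) ≠ 0) : clearingMonomial τ n ≠ 0 := by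
  simp [clearingMonomial, h₂, h₃, h₄, h₅]

theorem stmt2_general (a b ν : K) (hτ : ∀ m ∈ Set.Icc (n + 1) (n + 6), τ m ≠ 0) :
    pivLHS a b ν (tauRatio τ) n = 0 ↔ tauLHS a b ν τ n = 0 := by
  have clearing_ne_zero : clearingMonomial τ n ≠ 0 :=
    clearingMonomial_ne_zero (hτ _ (by simp)) (hτ _ (by simp)) (hτ _ (by simp)) (hτ _ (by simp))
  rw [← clearingMonomial_mul_pivLHS_tauRatio a b ν hτ, mul_eq_zero_iff_left clearing_ne_zero]

end Field

theorem stmt2 (a b ν : ℂ) (τ : ℤ → ℂ) (hτ : ∀ n : ℤ, τ n ≠ 0)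
    (w : ℤ → ℂ)
    (hw : ∀ m : ℤ, w m = τ m * τ (m + 3) / (τ (m + 1) * τ (m + 2)))
    (n : ℤ) :
    (w (n + 4) * w (n + 3) * w (n + 2) + w (n + 2) * w (n + 1) * w n
        + 2 * w (n + 2) ^ 2 * (w (n + 3) + w (n + 1))
        + w (n + 2) * (w (n + 3) ^ 2 + w (n + 3) * w (n + 1) + w (n + 1) ^ 2)
        + w (n + 2) ^ 3
        + ν * w (n + 2) * (w (n + 3) + w (n + 2) + w (n + 1))
        + b * w (n + 2) + a = 0)
      ↔
    (τ (n + 7) * τ (n + 4) ^ 2 * τ (n + 3) ^ 3 * τ (n + 2) ^ 2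
        + τ (n + 6) ^ 2 * τ (n + 3) ^ 4 * τ (n + 2) ^ 2
        + 2 * τ (n + 6) * τ (n + 5) ^ 2 * τ (n + 3) ^ 2 * τ (n + 2) ^ 3
        + τ (n + 6) * τ (n + 5) * τ (n + 4) ^ 2 * τ (n + 3) ^ 2 * τ (n + 2) * τ (n + 1)
        + τ (n + 5) ^ 4 * τ (n + 2) ^ 4
        + 2 * τ (n + 5) ^ 3 * τ (n + 4) ^ 2 * τ (n + 2) ^ 2 * τ (n + 1)
        + τ (n + 5) ^ 2 * τ (n + 4) ^ 4 * τ (n + 1) ^ 2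
        + τ (n + 5) ^ 2 * τ (n + 4) ^ 3 * τ (n + 3) ^ 2 * τ n
        + ν * (τ (n + 6) * τ (n + 5) * τ (n + 4) * τ (n + 3) ^ 3 * τ (n + 2) ^ 2
            + τ (n + 5) ^ 3 * τ (n + 4) * τ (n + 3) * τ (n + 2) ^ 3
            + τ (n + 5) ^ 2 * τ (n + 4) ^ 3 * τ (n + 3) * τ (n + 2) * τ (n + 1))
        + b * τ (n + 5) ^ 2 * τ (n + 4) ^ 2 * τ (n + 3) ^ 2 * τ (n + 2) ^ 2
        + a * τ (n + 5) * τ (n + 4) ^ 3 * τ (n + 3) ^ 3 * τ (n + 2) = 0) := by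
  obtain rfl : w = tauRatio τ := funext hw
  exact stmt2_general a b ν fun m _ => hτ m
end

section
/- Let a, b, ν ∈ ℂ, let τ : ℤ → ℂ with τ_n ≠ 0 for all n, set w_n := τ_n τ_{n+3} / (τ_{n+1} τ_{n+2}), and suppose (w_n) satisfies the (P.iv) recurrence for all n ∈ ℤ. Let k₁ := K₁(w₀,w₁,w₂,w₃) and k₂ := K₂(w₀,w₁,w₂,w₃). Then for all n ∈ ℤ the Somos-9 relation α₁τ_{n+9}τ_n + α₂τ_{n+8}τ_{n+1} + α₃τ_{n+7}τ_{n+2} + α₄τ_{n+6}τ_{n+3} + α₅τ_{n+5}τ_{n+4} = 0 holds, where α₁ = k₁, α₂ = a·k₂ − k₁², α₃ = a(a·k₂ − 2k₁²), α₄ = a(k₂² + ν·k₁k₂ + b·k₁² + a²k₁), α₅ = −k₁(k₂² + ν·k₁k₂ + b·k₁² + a²k₁). -/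
/-- The first integral `K₁` of the (P.iv) map. -/
noncomputable def K1 (a b ν w0 w1 w2 w3 : ℂ) : ℂ :=
  w1 * w2 * (w2 * w3 + w0 * w1 - w0 * w3 + (w1 + w2) ^ 2 + ν * (w1 + w2) + b)
    + a * (w1 + w2)

/-- The second first integral `K₂` of the (P.iv) map. -/
noncomputable def K2 (a b ν w0 w1 w2 w3 : ℂ) : ℂ :=
  w1 * w2 * (w0 ^ 2 * w1 + w3 ^ 2 * w2 + w0 * w3 * (w1 + w2)
      + w0 * (w2 ^ 2 + 2 * w1 ^ 2) + w3 * (w1 ^ 2 + 2 * w2 ^ 2)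
      + 3 * (w0 + w3) * w1 * w2 + (w1 + w2) ^ 3
      + ν * (w0 * w3 + (w0 + w3) * (w1 + w2) + (w1 + w2) ^ 2)
      + b * (w0 + w1 + w2 + w3))
    + a * (w0 * w1 + w3 * w2 + (w1 + w2) ^ 2)

/-!
Along an orbit of (P.iv) both first integrals are constant, and each `τ (n + 9 - i) * τ (n + i)`
is `τ (n + 5) * τ (n + 4)` times a monomial in `w n, …, w (n + 6)`. This turns the Somos-9 relation
into a polynomial relation between seven consecutive terms of the orbit. Its outer variables occur
only through `w n ⋯ w (n + 4)` and `w (n + 2) ⋯ w (n + 6)`. Modulo (P.iv), a product of five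
consecutive terms is a quadratic polynomial in the middle three, with coefficients in `a`, `k₁`,
`k₂`. Once the outer variables are eliminated, what remains is a combination of two relations
between `w (n + 1), …, w (n + 5)`.
-/

namespace PIV

section Polynomials

variable {R : Type*} [CommRing R] {a b ν w₀ w₁ w₂ w₃ w₄ : R}

/-- The polynomial whose vanishing on five consecutive terms is the (P.iv) recurrence. -/
def recurrencePoly (a b ν w₀ w₁ w₂ w₃ w₄ : R) : R :=
  w₄ * w₃ * w₂ + w₂ * w₁ * w₀
    + 2 * w₂ ^ 2 * (w₃ + w₁)
    + w₂ * (w₃ ^ 2 + w₃ * w₁ + w₁ ^ 2)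
    + w₂ ^ 3
    + ν * w₂ * (w₃ + w₂ + w₁)
    + b * w₂ + a

/-- The first integral `K₁` over an arbitrary commutative ring; over `ℂ` it unfolds to `K1`. -/
def firstIntegral₁ (a b ν w₀ w₁ w₂ w₃ : R) : R :=
  w₁ * w₂ * (w₂ * w₃ + w₀ * w₁ - w₀ * w₃ + (w₁ + w₂) ^ 2 + ν * (w₁ + w₂) + b)
    + a * (w₁ + w₂)

/-- The first integral `K₂` over an arbitrary commutative ring; over `ℂ` it unfolds to `K2`. -/
def firstIntegral₂ (a b ν w₀ w₁ w₂ w₃ : R) : R :=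
  w₁ * w₂ * (w₀ ^ 2 * w₁ + w₃ ^ 2 * w₂ + w₀ * w₃ * (w₁ + w₂)
      + w₀ * (w₂ ^ 2 + 2 * w₁ ^ 2) + w₃ * (w₁ ^ 2 + 2 * w₂ ^ 2)
      + 3 * (w₀ + w₃) * w₁ * w₂ + (w₁ + w₂) ^ 3
      + ν * (w₀ * w₃ + (w₀ + w₃) * (w₁ + w₂) + (w₁ + w₂) ^ 2)
      + b * (w₀ + w₁ + w₂ + w₃))
    + a * (w₀ * w₁ + w₃ * w₂ + (w₁ + w₂) ^ 2)

theorem firstIntegral₁_shift (h : recurrencePoly a b ν w₀ w₁ w₂ w₃ w₄ = 0) :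
    firstIntegral₁ a b ν w₁ w₂ w₃ w₄ = firstIntegral₁ a b ν w₀ w₁ w₂ w₃ := by
  unfold recurrencePoly at h
  unfold firstIntegral₁
  linear_combination (w₃ - w₁) * h

theorem firstIntegral₂_shift (h : recurrencePoly a b ν w₀ w₁ w₂ w₃ w₄ = 0) :
    firstIntegral₂ a b ν w₁ w₂ w₃ w₄ = firstIntegral₂ a b ν w₀ w₁ w₂ w₃ := by
  unfold recurrencePoly at h
  unfold firstIntegral₂
  linear_combination (w₃ * (w₂ + w₃ + w₄) - w₁ * (w₀ + w₁ + w₂)) * h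

theorem prod_five_eq_of_recurrencePoly (h : recurrencePoly a b ν w₀ w₁ w₂ w₃ w₄ = 0) :
    w₀ * w₁ * w₂ * w₃ * w₄
      = firstIntegral₁ a b ν w₀ w₁ w₂ w₃ * (w₁ + w₂ + w₃)
        - firstIntegral₂ a b ν w₀ w₁ w₂ w₃ - a * w₁ * w₃ := by
  unfold recurrencePoly at h
  unfold firstIntegral₁ firstIntegral₂
  linear_combination w₀ * w₁ * h

theorem mul_ends_eq_of_recurrencePoly (h : recurrencePoly a b ν w₀ w₁ w₂ w₃ w₄ = 0) :
    (firstIntegral₁ a b ν w₀ w₁ w₂ w₃ - a * w₂) * (w₀ * w₄)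
      = firstIntegral₂ a b ν w₀ w₁ w₂ w₃ * (w₀ + w₁ + w₂ + w₃ + w₄ + ν) + a ^ 2
        - firstIntegral₁ a b ν w₀ w₁ w₂ w₃
          * (w₀ * (w₂ + w₃) + w₄ * (w₁ + w₂) + w₁ * w₃ - b) := by
  linear_combination (norm := (unfold firstIntegral₁ firstIntegral₂ recurrencePoly; ring1))
    -recurrencePoly a b ν 0 w₀ w₁ w₂ w₃ * h

end Polynomials

section Orbits

variable {R : Type*} [CommRing R] {a b ν : R} {w : ℤ → R}

/-- `w` is a bi-infinite solution of the (P.iv) recurrence with parameters `a`, `b`, `ν`. -/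
def IsOrbit (a b ν : R) (w : ℤ → R) : Prop :=
  ∀ n : ℤ, recurrencePoly a b ν (w n) (w (n + 1)) (w (n + 2)) (w (n + 3)) (w (n + 4)) = 0

theorem IsOrbit.firstIntegral₁_eq (h : IsOrbit a b ν w) (n : ℤ) :
    firstIntegral₁ a b ν (w n) (w (n + 1)) (w (n + 2)) (w (n + 3))
      = firstIntegral₁ a b ν (w 0) (w 1) (w 2) (w 3) := by
  have periodic : Function.Periodic
      (fun n : ℤ ↦ firstIntegral₁ a b ν (w n) (w (n + 1)) (w (n + 2)) (w (n + 3))) 1 := fun n ↦ by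
    simpa only [add_assoc, Int.reduceAdd] using firstIntegral₁_shift (h n)
  simpa using periodic.int_mul_eq n

theorem IsOrbit.firstIntegral₂_eq (h : IsOrbit a b ν w) (n : ℤ) :
    firstIntegral₂ a b ν (w n) (w (n + 1)) (w (n + 2)) (w (n + 3))
      = firstIntegral₂ a b ν (w 0) (w 1) (w 2) (w 3) := by
  have periodic : Function.Periodic
      (fun n : ℤ ↦ firstIntegral₂ a b ν (w n) (w (n + 1)) (w (n + 2)) (w (n + 3))) 1 := fun n ↦ by
    simpa only [add_assoc, Int.reduceAdd] using firstIntegral₂_shift (h n)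
  simpa using periodic.int_mul_eq n

variable {k₁ k₂ : R}

theorem IsOrbit.prod_five_eq (h : IsOrbit a b ν w)
    (hk₁ : k₁ = firstIntegral₁ a b ν (w 0) (w 1) (w 2) (w 3))
    (hk₂ : k₂ = firstIntegral₂ a b ν (w 0) (w 1) (w 2) (w 3)) (n : ℤ) :
    w n * w (n + 1) * w (n + 2) * w (n + 3) * w (n + 4)
      = k₁ * (w (n + 1) + w (n + 2) + w (n + 3)) - k₂ - a * w (n + 1) * w (n + 3) := by
  rw [hk₁, hk₂, ← h.firstIntegral₁_eq n, ← h.firstIntegral₂_eq n]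
  exact prod_five_eq_of_recurrencePoly (h n)

theorem IsOrbit.mul_ends_eq (h : IsOrbit a b ν w)
    (hk₁ : k₁ = firstIntegral₁ a b ν (w 0) (w 1) (w 2) (w 3))
    (hk₂ : k₂ = firstIntegral₂ a b ν (w 0) (w 1) (w 2) (w 3)) (n : ℤ) :
    (k₁ - a * w (n + 2)) * (w n * w (n + 4))
      = k₂ * (w n + w (n + 1) + w (n + 2) + w (n + 3) + w (n + 4) + ν) + a ^ 2
        - k₁ * (w n * (w (n + 2) + w (n + 3)) + w (n + 4) * (w (n + 1) + w (n + 2))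
          + w (n + 1) * w (n + 3) - b) := by
  rw [hk₁, hk₂, ← h.firstIntegral₁_eq n, ← h.firstIntegral₂_eq n]
  exact mul_ends_eq_of_recurrencePoly (h n)

theorem IsOrbit.seven_term_relation (h : IsOrbit a b ν w)
    (hk₁ : k₁ = firstIntegral₁ a b ν (w 0) (w 1) (w 2) (w 3))
    (hk₂ : k₂ = firstIntegral₂ a b ν (w 0) (w 1) (w 2) (w 3)) (n : ℤ) :
    k₁ * ((w n * w (n + 1) * w (n + 2) * w (n + 3) * w (n + 4))
          * (w (n + 2) * w (n + 3) * w (n + 4) * w (n + 5) * w (n + 6)))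
      + (a * k₂ - k₁ ^ 2)
          * (w (n + 3) * (w (n + 1) * w (n + 2) * w (n + 3) * w (n + 4) * w (n + 5)))
      + a * (a * k₂ - 2 * k₁ ^ 2) * (w (n + 2) * w (n + 3) * w (n + 4))
      + a * (k₂ ^ 2 + ν * k₁ * k₂ + b * k₁ ^ 2 + a ^ 2 * k₁) * w (n + 3)
      - k₁ * (k₂ ^ 2 + ν * k₁ * k₂ + b * k₁ ^ 2 + a ^ 2 * k₁) = 0 := by
  have prod_left := h.prod_five_eq hk₁ hk₂ n
  have prod_middle := h.prod_five_eq hk₁ hk₂ (n + 1)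
  have prod_right := h.prod_five_eq hk₁ hk₂ (n + 2)
  have ends_middle := h.mul_ends_eq hk₁ hk₂ (n + 1)
  simp only [add_assoc, Int.reduceAdd] at prod_middle prod_right ends_middle
  rw [prod_left, prod_middle, prod_right]
  linear_combination k₁ * (k₁ - a * w (n + 3)) * ends_middle

end Orbits

section TauFunctions

variable {R : Type*} [CommRing R] {τ w : ℤ → R}

/-- `τ` is a tau function of `w`: the substitution `w n = τ n * τ (n + 3) / (τ (n + 1) * τ (n + 2))`
with its denominator cleared. -/
def IsTauFunction (τ w : ℤ → R) : Prop :=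
  ∀ n : ℤ, τ (n + 3) * τ n = w n * (τ (n + 2) * τ (n + 1))

theorem IsTauFunction.mul_eq_prod_mul [IsDomain R] (h : IsTauFunction τ w) (hτ : ∀ n, τ n ≠ 0)
    (n : ℤ) (k : ℕ) :
    τ (n + 2 * k + 3) * τ n
      = (∏ i ∈ Finset.range (k + 1), w (n + 2 * i)) * (τ (n + 2 * k + 2) * τ (n + 1)) := by
  induction k with
  | zero => simpa using h n
  | succ k ih =>
    have index : n + 2 * ((k + 1 : ℕ) : ℤ) = n + 2 * k + 2 := by push_cast; ring
    have next := h (n + 2 * k + 2)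
    rw [show n + 2 * k + 2 + 1 = n + 2 * k + 3 by ring] at next
    rw [Finset.prod_range_succ, index]
    apply mul_left_cancel₀ (mul_ne_zero (hτ (n + 2 * k + 3)) (hτ (n + 2 * k + 2)))
    linear_combination τ (n + 2 * k + 2 + 3) * τ (n + 2 * k + 2) * ih
      + (∏ i ∈ Finset.range (k + 1), w (n + 2 * i)) * τ (n + 2 * k + 2) * τ (n + 1) * next

end TauFunctions

end PIV

open PIV in
theorem stmt3_general {R : Type*} [CommRing R] [IsDomain R] {a b ν : R} {τ w : ℤ → R}
    (hτ : ∀ n, τ n ≠ 0) (hw : IsTauFunction τ w) (hpiv : IsOrbit a b ν w) {k₁ k₂ : R}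
    (hk₁ : k₁ = firstIntegral₁ a b ν (w 0) (w 1) (w 2) (w 3))
    (hk₂ : k₂ = firstIntegral₂ a b ν (w 0) (w 1) (w 2) (w 3)) (n : ℤ) :
    k₁ * (τ (n + 9) * τ n)
      + (a * k₂ - k₁ ^ 2) * (τ (n + 8) * τ (n + 1))
      + (a * (a * k₂ - 2 * k₁ ^ 2)) * (τ (n + 7) * τ (n + 2))
      + (a * (k₂ ^ 2 + ν * k₁ * k₂ + b * k₁ ^ 2 + a ^ 2 * k₁)) * (τ (n + 6) * τ (n + 3))
      + (-(k₁ * (k₂ ^ 2 + ν * k₁ * k₂ + b * k₁ ^ 2 + a ^ 2 * k₁))) * (τ (n + 5) * τ (n + 4))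
      = 0 := by
  have pair₀ : τ (n + 9) * τ n
      = w n * w (n + 2) * w (n + 4) * w (n + 6) * (τ (n + 8) * τ (n + 1)) := by
    simpa [Finset.prod_range_succ, add_assoc] using hw.mul_eq_prod_mul hτ n 3
  have pair₁ : τ (n + 8) * τ (n + 1)
      = w (n + 1) * w (n + 3) * w (n + 5) * (τ (n + 7) * τ (n + 2)) := by
    simpa [Finset.prod_range_succ, add_assoc] using hw.mul_eq_prod_mul hτ (n + 1) 2
  have pair₂ : τ (n + 7) * τ (n + 2) = w (n + 2) * w (n + 4) * (τ (n + 6) * τ (n + 3)) := by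
    simpa [Finset.prod_range_succ, add_assoc] using hw.mul_eq_prod_mul hτ (n + 2) 1
  have pair₃ : τ (n + 6) * τ (n + 3) = w (n + 3) * (τ (n + 5) * τ (n + 4)) := by
    simpa only [add_assoc, Int.reduceAdd] using hw (n + 3)
  rw [pair₀, pair₁, pair₂, pair₃]
  linear_combination τ (n + 5) * τ (n + 4) * hpiv.seven_term_relation hk₁ hk₂ n

theorem stmt3 (a b ν : ℂ) (τ : ℤ → ℂ) (hτ : ∀ n : ℤ, τ n ≠ 0)
    (w : ℤ → ℂ)
    (hw : ∀ m : ℤ, w m = τ m * τ (m + 3) / (τ (m + 1) * τ (m + 2)))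
    (hpiv : ∀ n : ℤ,
      w (n + 4) * w (n + 3) * w (n + 2) + w (n + 2) * w (n + 1) * w n
        + 2 * w (n + 2) ^ 2 * (w (n + 3) + w (n + 1))
        + w (n + 2) * (w (n + 3) ^ 2 + w (n + 3) * w (n + 1) + w (n + 1) ^ 2)
        + w (n + 2) ^ 3
        + ν * w (n + 2) * (w (n + 3) + w (n + 2) + w (n + 1))
        + b * w (n + 2) + a = 0)
    (k1 k2 : ℂ)
    (hk1 : k1 = K1 a b ν (w 0) (w 1) (w 2) (w 3))
    (hk2 : k2 = K2 a b ν (w 0) (w 1) (w 2) (w 3)) :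
    ∀ n : ℤ,
      k1 * (τ (n + 9) * τ n)
        + (a * k2 - k1 ^ 2) * (τ (n + 8) * τ (n + 1))
        + (a * (a * k2 - 2 * k1 ^ 2)) * (τ (n + 7) * τ (n + 2))
        + (a * (k2 ^ 2 + ν * k1 * k2 + b * k1 ^ 2 + a ^ 2 * k1)) * (τ (n + 6) * τ (n + 3))
        + (-(k1 * (k2 ^ 2 + ν * k1 * k2 + b * k1 ^ 2 + a ^ 2 * k1))) * (τ (n + 5) * τ (n + 4))
        = 0 := by
  have tau : PIV.IsTauFunction τ w := fun m ↦ by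
    have h₁ := hτ (m + 1)
    have h₂ := hτ (m + 2)
    rw [hw m]
    field_simp
  exact stmt3_general hτ tau hpiv hk1 hk2
end

section
/- Let K be the field of fractions of the polynomial ring ℤ[a, b, ν, t₀, t₁, t₂, t₃, t₄, t₅, t₆] in 10 indeterminates. Then there exists a sequence τ : ℤ → K with τ_i = t_i for 0 ≤ i ≤ 6, with τ_n ≠ 0 for all n ∈ ℤ, satisfying for all n ∈ ℤ the recurrence τ_{n+7}τ_{n+4}²τ_{n+3}³τ_{n+2}² + τ_{n+6}²τ_{n+3}⁴τ_{n+2}² + 2τ_{n+6}τ_{n+5}²τ_{n+3}²τ_{n+2}³ + τ_{n+6}τ_{n+5}τ_{n+4}²τ_{n+3}²τ_{n+2}τ_{n+1} + τ_{n+5}⁴τ_{n+2}⁴ + 2τ_{n+5}³τ_{n+4}²τ_{n+2}²τ_{n+1} + τ_{n+5}²τ_{n+4}⁴τ_{n+1}² + τ_{n+5}²τ_{n+4}³τ_{n+3}²τ_n + ν(τ_{n+6}τ_{n+5}τ_{n+4}τ_{n+3}³τ_{n+2}² + τ_{n+5}³τ_{n+4}τ_{n+3}τ_{n+2}³ + τ_{n+5}²τ_{n+4}³τ_{n+3}τ_{n+2}τ_{n+1})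 + b·τ_{n+5}²τ_{n+4}²τ_{n+3}²τ_{n+2}² + a·τ_{n+5}τ_{n+4}³τ_{n+3}³τ_{n+2} = 0, and such that every τ_n lies in the subring ℤ[a, b, ν, t₀, t₁, t₂^{±1}, t₃^{±1}, t₄^{±1}, t₅, t₆] of K, i.e. the subring of K generated by a, b, ν, t₀, t₁, t₅, t₆ together with t₂, t₃, t₄ and their inverses (the Laurent property). -/
noncomputable section

/-- The polynomial ring `ℤ[a, b, ν, t₀, t₁, t₂, t₃, t₄, t₅, t₆]` in 10 indeterminates. -/
abbrev PolyR : Type := MvPolynomial (Fin 10) ℤ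

/-- Its field of fractions `K`. -/
abbrev FracK : Type := FractionRing PolyR

/-- The indeterminate `a` viewed in `K`. -/
def va : FracK := algebraMap PolyR FracK (MvPolynomial.X 0)

/-- The indeterminate `b` viewed in `K`. -/
def vb : FracK := algebraMap PolyR FracK (MvPolynomial.X 1)

/-- The indeterminate `ν` viewed in `K`. -/
def vnu : FracK := algebraMap PolyR FracK (MvPolynomial.X 2)

/-- The indeterminates `t₀, …, t₆` viewed in `K`. -/
def tv (i : Fin 7) : FracK := algebraMap PolyR FracK (MvPolynomial.X ⟨i.1 + 3, by omega⟩)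

/-!
The recurrence is solvable for its last term and, being invariant under reversing its eight terms,
also for its first. Hence `tᵢ ↦ tᵢ₊₁` extends to an automorphism of `K` fixing `a`, `b`, `ν`
(the shift), and `τ` is the orbit of `t₀`; the recurrence and non-vanishing propagate along it.

Let `L` be the Laurent ring and `O` the local ring of the polynomial ring at the prime `t₅`. The
shift introduces no inverse into `L` other than that of `t₅`, and `L[1/t₅] ∩ O = L`, so it suffices
to show that each `τₙ` lies in `O`. The terms `τ₆`, `τ₇`, `τ₈` are units of `O`. Computing `τ₉` and
`τ₁₀` divides by powers of `t₅`, but these cancel (singularity confinement), so `τ₄, …, τ₁₀` all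
lie in `O`. Therefore the fourth power of the shift maps `L` into `O`, and `τₙ ∈ L` for `n ≥ 0`
follows by induction. Reversal `tᵢ ↦ t₆₋ᵢ` preserves `L` and takes care of negative `n`.
-/

open MvPolynomial

section Automorphisms

theorem isAlgebraic_adjoin_of_closure_eq_top {A K : Type*} [CommRing A] [Field K] [Algebra A K]
    {s : Set K} (hs : Subfield.closure (Set.range (algebraMap A K) ∪ s) = ⊤) :
    Algebra.IsAlgebraic (Algebra.adjoin A s) K := by
  refine ⟨fun x => ?_⟩
  have hx : x ∈ Subfield.closure (Set.range (algebraMap A K) ∪ s) := hs ▸ Subfield.mem_top x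
  obtain ⟨y, hy, z, hz, rfl⟩ := Subfield.mem_closure_iff.mp hx
  have hle : Subring.closure (Set.range (algebraMap A K) ∪ s) ≤
      (Algebra.adjoin A s).toSubring :=
    Subring.closure_le.mpr
      (Set.union_subset (Set.range_subset_iff.mpr (Algebra.adjoin A s).algebraMap_mem)
        Algebra.subset_adjoin)
  have hy' := isAlgebraic_algebraMap (A := K) (⟨y, hle hy⟩ : Algebra.adjoin A s)
  have hz' := isAlgebraic_algebraMap (A := K) (⟨z, hle hz⟩ : Algebra.adjoin A s)
  exact div_eq_mul_inv y z ▸ hy'.mul hz'.inv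

variable {A σ K : Type*} [CommRing A] [Field K] [Algebra A K]
  [Algebra (MvPolynomial σ A) K] [IsScalarTower A (MvPolynomial σ A) K]
  [IsFractionRing (MvPolynomial σ A) K]

theorem closure_eq_top_of_X_mem {s : Set K}
    (hs : ∀ i, algebraMap (MvPolynomial σ A) K (X i) ∈
      Subfield.closure (Set.range (algebraMap A K) ∪ s)) :
    Subfield.closure (Set.range (algebraMap A K) ∪ s) = ⊤ := by
  rw [eq_top_iff, ← IsFractionRing.closure_range_algebraMap (MvPolynomial σ A) K,
    Subfield.closure_le, Set.range_subset_iff]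
  intro p
  induction p using MvPolynomial.induction_on with
  | C r =>
    rw [← algebraMap_eq, ← IsScalarTower.algebraMap_apply]
    exact Subfield.subset_closure (Or.inl ⟨r, rfl⟩)
  | add p q hp hq => rw [map_add]; exact add_mem hp hq
  | mul_X p i hp => rw [map_mul]; exact mul_mem hp (hs i)

variable [IsDomain A] [Finite σ] {v : σ → K}

theorem algebraicIndependent_of_X_mem_closure
    (hv : ∀ i, algebraMap (MvPolynomial σ A) K (X i) ∈
      Subfield.closure (Set.range (algebraMap A K) ∪ Set.range v)) :
    AlgebraicIndependent A v := by
  have := IsLocalization.isAlgebraic K (nonZeroDivisors (MvPolynomial σ A))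
  have hX := (IsTranscendenceBasis.mvPolynomial σ A).algebraMap_comp (A := K)
  have := isAlgebraic_adjoin_of_closure_eq_top (closure_eq_top_of_X_mem hv)
  have : FaithfulSMul A K :=
    (faithfulSMul_iff_algebraMap_injective A K).mpr hX.1.algebraMap_injective
  exact (Algebra.IsAlgebraic.isTranscendenceBasis_of_lift_le_trdeg_of_finite A v
    hX.lift_cardinalMk_eq_trdeg.le).1

theorem exists_algEquiv_apply_X_eq
    (hv : ∀ i, algebraMap (MvPolynomial σ A) K (X i) ∈
      Subfield.closure (Set.range (algebraMap A K) ∪ Set.range v)) :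
    ∃ Φ : K ≃ₐ[A] K, ∀ i, Φ (algebraMap (MvPolynomial σ A) K (X i)) = v i := by
  have hinj := algebraicIndependent_of_X_mem_closure hv
  let φ : K →ₐ[A] K := IsFractionRing.liftAlgHom (g := aeval v) hinj
  have hφ (i : σ) : φ (algebraMap (MvPolynomial σ A) K (X i)) = v i :=
    (IsFractionRing.lift_algebraMap hinj _).trans (aeval_X v i)
  have hsurj : (φ : K →+* K).fieldRange = ⊤ := by
    rw [eq_top_iff, ← closure_eq_top_of_X_mem hv, Subfield.closure_le]
    exact Set.union_subset (Set.range_subset_iff.mpr fun r => ⟨algebraMap A K r, φ.commutes r⟩)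
      (Set.range_subset_iff.mpr fun i => ⟨_, hφ i⟩)
  exact ⟨AlgEquiv.ofBijective φ ⟨φ.injective, RingHom.fieldRange_eq_top_iff.mp hsurj⟩, hφ⟩

end Automorphisms

section Localizations

/-- The local ring `R_(p)` of fractions of `R` whose denominator is not divisible by the prime
element `p`, as a subring of the fraction field `K`. -/
def localSubalgebra {R : Type*} (K : Type*) [CommRing R] [IsDomain R] [Field K] [Algebra R K]
    [IsFractionRing R K] {p : R} (hp : Prime p) : Subalgebra R K :=
  haveI := (Ideal.span_singleton_prime hp.ne_zero).mpr hp
  Localization.subalgebra.ofField K (Ideal.span {p}).primeCompl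
    (Ideal.primeCompl_le_nonZeroDivisors _)

variable {R K : Type*} [CommRing R] [IsDomain R] [Field K] [Algebra R K]
  [IsFractionRing R K]

theorem mem_localSubalgebra_iff {p : R} (hp : Prime p) {x : K} :
    x ∈ localSubalgebra K hp ↔
      ∃ r s : R, ¬ p ∣ s ∧ x = algebraMap R K r * (algebraMap R K s)⁻¹ := by
  change (∃ r s, ∃ _ : s ∈ (Ideal.span {p} : Ideal R).carrierᶜ, _) ↔ _
  simp [← Ideal.mem_span_singleton]

theorem inv_mem_localSubalgebra_of_mul_eq {p q : R} (hp : Prime p) (hq : ¬ p ∣ q) {x s : K}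
    (hs : s ∈ localSubalgebra K hp) (h : x * s = algebraMap R K q) :
    x⁻¹ ∈ localSubalgebra K hp := by
  have hq0 : algebraMap R K q ≠ 0 :=
    (map_ne_zero_iff _ (IsFractionRing.injective R K)).mpr fun h0 => hq (h0 ▸ dvd_zero p)
  have hqinv : (algebraMap R K q)⁻¹ ∈ localSubalgebra K hp :=
    (mem_localSubalgebra_iff hp).mpr ⟨1, q, hq, by rw [map_one, one_mul]⟩
  have hs0 : s ≠ 0 := right_ne_zero_of_mul (h ▸ hq0)
  have hx : x⁻¹ = s * (algebraMap R K q)⁻¹ := by rw [← h, mul_inv_rev, mul_inv_cancel_left₀ hs0]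
  exact hx ▸ mul_mem hs hqinv

theorem not_X_dvd_of_eval_ne_zero {A σ : Type*} [CommSemiring A] {i : σ} {v : σ → A}
    (hi : v i = 0) {q : MvPolynomial σ A} (hq : eval v q ≠ 0) : ¬ X i ∣ q := by
  rintro ⟨r, rfl⟩
  exact hq (by rw [map_mul, eval_X, hi, zero_mul])

theorem mem_of_mul_eq_of_inv_mem {M F : Type*} [GroupWithZero F] [SetLike M F]
    [MulMemClass M F] {T : M} {x d n : F} (hd : d ≠ 0) (hd' : d⁻¹ ∈ T) (hn : n ∈ T)
    (h : x * d = n) : x ∈ T :=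
  (eq_mul_inv_iff_mul_eq₀ hd).mpr h ▸ mul_mem hn hd'

variable {A σ K : Type*} [CommRing A] [IsDomain A] [Field K]
  [Algebra (MvPolynomial σ A) K] [IsFractionRing (MvPolynomial σ A) K]

theorem algebraMap_X_ne_zero (i : σ) : algebraMap (MvPolynomial σ A) K (X i) ≠ 0 :=
  (map_ne_zero_iff _ (IsFractionRing.injective (MvPolynomial σ A) K)).mpr (X_ne_zero i)

theorem closure_image_X_le_nonZeroDivisors (I : Set σ) :
    Submonoid.closure (X '' I) ≤ nonZeroDivisors (MvPolynomial σ A) :=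
  Submonoid.closure_le.mpr <|
    Set.image_subset_iff.mpr fun i _ => mem_nonZeroDivisors_of_ne_zero (X_ne_zero i)

variable (A K) in
/-- The ring of polynomials over `A` in which the variables with index in `I` are allowed to have
negative exponents, as a subring of the field `K` of rational functions. -/
def laurentSubalgebra (I : Set σ) : Subalgebra (MvPolynomial σ A) K :=
  Localization.subalgebra.ofField K (Submonoid.closure (X '' I))
    (closure_image_X_le_nonZeroDivisors I)

theorem mem_laurentSubalgebra_iff {I : Set σ} {x : K} :
    x ∈ laurentSubalgebra A K I ↔ ∃ p, ∃ s ∈ Submonoid.closure (X '' I),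
      x = algebraMap (MvPolynomial σ A) K p * (algebraMap (MvPolynomial σ A) K s)⁻¹ :=
  exists_congr fun _ => exists_congr fun _ => exists_prop

theorem inv_X_mem_laurentSubalgebra {I : Set σ} {i : σ} (hi : i ∈ I) :
    (algebraMap (MvPolynomial σ A) K (X i))⁻¹ ∈ laurentSubalgebra A K I :=
  mem_laurentSubalgebra_iff.mpr
    ⟨1, X i, Submonoid.subset_closure ⟨i, hi, rfl⟩, by rw [map_one, one_mul]⟩

theorem laurentSubalgebra_mono {I J : Set σ} (h : I ⊆ J) :
    laurentSubalgebra A K I ≤ laurentSubalgebra A K J := by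
  intro x hx
  obtain ⟨p, s, hs, rfl⟩ := mem_laurentSubalgebra_iff.mp hx
  exact mem_laurentSubalgebra_iff.mpr
    ⟨p, s, Submonoid.closure_mono (Set.image_mono h) hs, rfl⟩

theorem map_mem_of_mem_laurentSubalgebra {F : Type*} [Field F] {f : K →+* F} {T : Subring F}
    {I : Set σ} (hC : ∀ r, f (algebraMap (MvPolynomial σ A) K (C r)) ∈ T)
    (hX : ∀ i, f (algebraMap (MvPolynomial σ A) K (X i)) ∈ T)
    (hI : ∀ i ∈ I, (f (algebraMap (MvPolynomial σ A) K (X i)))⁻¹ ∈ T)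
    {x : K} (hx : x ∈ laurentSubalgebra A K I) : f x ∈ T := by
  obtain ⟨p, s, hs, rfl⟩ := mem_laurentSubalgebra_iff.mp hx
  clear hx
  rw [map_mul, map_inv₀]
  refine mul_mem ?_ ?_
  · induction p using MvPolynomial.induction_on with
    | C r => exact hC r
    | add p q hp hq => rw [map_add, map_add]; exact add_mem hp hq
    | mul_X p i hp => rw [map_mul, map_mul]; exact mul_mem hp (hX i)
  · induction hs using Submonoid.closure_induction with
    | mem s hs => obtain ⟨i, hi, rfl⟩ := hs; exact hI i hi
    | one => simp
    | mul s t _ _ hs ht => rw [map_mul, map_mul, mul_inv]; exact mul_mem hs ht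

theorem not_X_dvd_of_mem_closure {I : Set σ} {i : σ} (hi : i ∉ I) {s : MvPolynomial σ A}
    (hs : s ∈ Submonoid.closure (X '' I)) : ¬ X i ∣ s := by
  induction hs using Submonoid.closure_induction with
  | mem s hs =>
    obtain ⟨j, hj, rfl⟩ := hs
    rw [X_dvd_X]
    rintro rfl
    exact hi hj
  | one => exact X_prime.not_dvd_one
  | mul s t _ _ hs ht => exact X_prime.not_dvd_mul hs ht

theorem laurentSubalgebra_le_localSubalgebra {I : Set σ} {i : σ} (hi : i ∉ I) :
    laurentSubalgebra A K I ≤ localSubalgebra K (X_prime (R := A) (i := i)) := by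
  intro x hx
  obtain ⟨p, s, hs, rfl⟩ := mem_laurentSubalgebra_iff.mp hx
  exact (mem_localSubalgebra_iff _).mpr ⟨p, s, not_X_dvd_of_mem_closure hi hs, rfl⟩

theorem mem_laurentSubalgebra_of_mem_insert {I : Set σ} {i : σ} {x : K}
    (hx : x ∈ laurentSubalgebra A K (insert i I))
    (hx' : x ∈ localSubalgebra K (X_prime (R := A) (i := i))) :
    x ∈ laurentSubalgebra A K I := by
  obtain ⟨p, s, hs, rfl⟩ := mem_laurentSubalgebra_iff.mp hx
  rw [Set.image_insert_eq, Set.insert_eq, Submonoid.closure_union, Submonoid.mem_sup] at hs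
  obtain ⟨y, hy, s, hs, rfl⟩ := hs
  obtain ⟨k, rfl⟩ := Submonoid.mem_closure_singleton.mp hy
  obtain ⟨r, q, hq, hxq⟩ := (mem_localSubalgebra_iff _).mp hx'
  rw [map_mul, map_pow] at hxq
  have hXi : algebraMap (MvPolynomial σ A) K (X i) ≠ 0 := algebraMap_X_ne_zero i
  have hs0 : algebraMap (MvPolynomial σ A) K s ≠ 0 :=
    IsFractionRing.to_map_ne_zero_of_mem_nonZeroDivisors (closure_image_X_le_nonZeroDivisors I hs)
  have hq0 : algebraMap (MvPolynomial σ A) K q ≠ 0 :=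
    (map_ne_zero_iff _ (IsFractionRing.injective _ K)).mpr fun h0 => hq (h0 ▸ dvd_zero _)
  have hpq : p * q = X i ^ k * (r * s) := by
    apply FaithfulSMul.algebraMap_injective (MvPolynomial σ A) K
    rw [← div_eq_mul_inv, ← div_eq_mul_inv, div_eq_div_iff (by simp [hXi, hs0]) hq0] at hxq
    simp only [map_mul, map_pow, hxq]
    ring
  obtain ⟨p, rfl⟩ := X_prime.pow_dvd_of_dvd_mul_right k hq (Dvd.intro _ hpq.symm)
  refine mem_laurentSubalgebra_iff.mpr ⟨p, s, hs, ?_⟩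
  rw [map_mul, map_mul, map_pow]
  field_simp

end Localizations

section Recurrence

variable {R S : Type*} [CommRing R] [CommRing S]

/-- The left-hand side of the recurrence on eight consecutive terms `x 0, …, x 7`. -/
def recurrenceLHS (a b ν : R) (x : Fin 8 → R) : R :=
  x 7 * x 4 ^ 2 * x 3 ^ 3 * x 2 ^ 2 + x 6 ^ 2 * x 3 ^ 4 * x 2 ^ 2
    + 2 * x 6 * x 5 ^ 2 * x 3 ^ 2 * x 2 ^ 3 + x 6 * x 5 * x 4 ^ 2 * x 3 ^ 2 * x 2 * x 1
    + x 5 ^ 4 * x 2 ^ 4 + 2 * x 5 ^ 3 * x 4 ^ 2 * x 2 ^ 2 * x 1 + x 5 ^ 2 * x 4 ^ 4 * x 1 ^ 2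
    + x 5 ^ 2 * x 4 ^ 3 * x 3 ^ 2 * x 0
    + ν * (x 6 * x 5 * x 4 * x 3 ^ 3 * x 2 ^ 2 + x 5 ^ 3 * x 4 * x 3 * x 2 ^ 3
      + x 5 ^ 2 * x 4 ^ 3 * x 3 * x 2 * x 1)
    + b * x 5 ^ 2 * x 4 ^ 2 * x 3 ^ 2 * x 2 ^ 2 + a * x 5 * x 4 ^ 3 * x 3 ^ 3 * x 2

theorem recurrenceLHS_rev (a b ν : R) (x : Fin 8 → R) :
    recurrenceLHS a b ν (fun i => x i.rev) = recurrenceLHS a b ν x := by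
  simp only [recurrenceLHS, Fin.reduceRev]
  ring

/-- The part of the next numerator that is divisible by `x 5`, divided by `x 5`; it is the numerator
of `pQuotient`. -/
def pNumerator (a b ν : R) (x : Fin 7 → R) : R :=
  -(2 * x 6 * x 5 * x 3 ^ 2 * x 2 ^ 3 + x 6 * x 4 ^ 2 * x 3 ^ 2 * x 2 * x 1 + x 5 ^ 3 * x 2 ^ 4
    + 2 * x 5 ^ 2 * x 4 ^ 2 * x 2 ^ 2 * x 1 + x 5 * x 4 ^ 4 * x 1 ^ 2
    + x 5 * x 4 ^ 3 * x 3 ^ 2 * x 0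
    + ν * (x 6 * x 4 * x 3 ^ 3 * x 2 ^ 2 + x 5 ^ 2 * x 4 * x 3 * x 2 ^ 3
      + x 5 * x 4 ^ 3 * x 3 * x 2 * x 1)
    + b * x 5 * x 4 ^ 2 * x 3 ^ 2 * x 2 ^ 2 + a * x 4 ^ 3 * x 3 ^ 3 * x 2)

/-- The numerator of `qQuotient`, found by eliminating `x 8` and `pQuotient` from the identity
`IsSolution.mul_qQuotient`. -/
def qNumerator (b ν : R) (x : Fin 7 → R) : R :=
  x 6 * (x 6 * x 3 ^ 2 * x 2 ^ 3 + x 5 ^ 2 * x 2 ^ 4 + 2 * x 5 * x 4 ^ 2 * x 2 ^ 2 * x 1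
    + x 4 ^ 4 * x 1 ^ 2 + x 4 ^ 3 * x 3 ^ 2 * x 0
    + ν * (x 5 * x 4 * x 3 * x 2 ^ 3 + x 4 ^ 3 * x 3 * x 2 * x 1)
    + b * x 4 ^ 2 * x 3 ^ 2 * x 2 ^ 2)

/-- The numerator of the term following `x 0, …, x 6`; its denominator is
`x 4 ^ 2 * x 3 ^ 3 * x 2 ^ 2`. -/
def nextNumerator (a b ν : R) (x : Fin 7 → R) : R :=
  x 5 * pNumerator a b ν x - x 6 ^ 2 * x 3 ^ 4 * x 2 ^ 2

/-- The numerator of the second term following `x 0, …, x 6`; its denominator is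
`x 4 ^ 3 * x 3 ^ 6 * x 2 ^ 4`. -/
def nextNextNumerator (a b ν : R) (x : Fin 7 → R) : R :=
  x 5 ^ 2 * qNumerator b ν x * x 3 ^ 2 * x 2 ^ 3 - pNumerator a b ν x ^ 2
    - x 6 ^ 3 * x 3 ^ 6 * x 2 ^ 5 - ν * x 6 * x 4 * x 3 ^ 3 * x 2 ^ 2 * pNumerator a b ν x
    - b * x 6 ^ 2 * x 4 ^ 2 * x 3 ^ 6 * x 2 ^ 4

theorem recurrenceLHS_eq_sub (a b ν : R) (x : Fin 8 → R) :
    recurrenceLHS a b ν x = x 7 * (x 4 ^ 2 * x 3 ^ 3 * x 2 ^ 2)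
      - nextNumerator a b ν fun i => x i.castSucc := by
  simp only [recurrenceLHS, nextNumerator, pNumerator, Fin.reduceCastSucc]
  ring

section Map

variable {G : Type*} [FunLike G R S] [RingHomClass G R S] (f : G)

theorem map_recurrenceLHS (a b ν : R) (x : Fin 8 → R) :
    f (recurrenceLHS a b ν x) = recurrenceLHS (f a) (f b) (f ν) fun i => f (x i) := by
  simp only [recurrenceLHS, map_add, map_mul, map_pow, map_ofNat]

theorem map_pNumerator (a b ν : R) (x : Fin 7 → R) :
    f (pNumerator a b ν x) = pNumerator (f a) (f b) (f ν) fun i => f (x i) := by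
  simp only [pNumerator, map_neg, map_add, map_mul, map_pow, map_ofNat]

theorem map_qNumerator (b ν : R) (x : Fin 7 → R) :
    f (qNumerator b ν x) = qNumerator (f b) (f ν) fun i => f (x i) := by
  simp only [qNumerator, map_add, map_mul, map_pow, map_ofNat]

theorem map_nextNumerator (a b ν : R) (x : Fin 7 → R) :
    f (nextNumerator a b ν x) = nextNumerator (f a) (f b) (f ν) fun i => f (x i) := by
  simp only [nextNumerator, map_sub, map_mul, map_pow, map_pNumerator]

theorem map_nextNextNumerator (a b ν : R) (x : Fin 7 → R) :
    f (nextNextNumerator a b ν x) = nextNextNumerator (f a) (f b) (f ν) fun i => f (x i) := by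
  simp only [nextNextNumerator, map_sub, map_mul, map_pow, map_pNumerator, map_qNumerator]

end Map

theorem nextNumerator_mem {a b ν : R} {x : Fin 7 → R} {T : Subring R} (ha : a ∈ T) (hb : b ∈ T)
    (hν : ν ∈ T) (hx : ∀ i, x i ∈ T) : nextNumerator a b ν x ∈ T := by
  let y : T := nextNumerator ⟨a, ha⟩ ⟨b, hb⟩ ⟨ν, hν⟩ fun i => ⟨x i, hx i⟩
  have hy : T.subtype y = nextNumerator a b ν x := map_nextNumerator T.subtype _ _ _ _
  exact hy ▸ y.2

/-- `x` satisfies the recurrence with parameters `a`, `b`, `ν`. -/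
def IsSolution (a b ν : R) (x : ℕ → R) : Prop :=
  ∀ n, recurrenceLHS a b ν (fun i : Fin 8 => x (n + i)) = 0

section CommRing

variable {a b ν : R} {x y : ℕ → R}

theorem IsSolution.mul_eq_nextNumerator (hx : IsSolution a b ν x) (n : ℕ) :
    x (n + 7) * (x (n + 4) ^ 2 * x (n + 3) ^ 3 * x (n + 2) ^ 2) =
      nextNumerator a b ν fun i : Fin 7 => x (n + i) := by
  have h := hx n
  rw [recurrenceLHS_eq_sub] at h
  exact sub_eq_zero.mp h

theorem IsSolution.eq_of_eq_of_lt [IsDomain R] (hx : IsSolution a b ν x)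
    (hy : IsSolution a b ν y) (hy0 : ∀ n, y n ≠ 0) (hxy : ∀ i < 7, x i = y i) (n : ℕ) :
    x n = y n := by
  induction n using Nat.strong_induction_on with
  | _ n ih =>
    obtain hn | hn := lt_or_ge n 7
    · exact hxy n hn
    · obtain ⟨m, rfl⟩ := Nat.exists_eq_add_of_le' hn
      have hnext := hx.mul_eq_nextNumerator m
      have hwindow : (fun i : Fin 7 => x (m + i)) = fun i : Fin 7 => y (m + i) :=
        funext fun i => ih _ (by omega)
      rw [hwindow, ih (m + 4) (by omega), ih (m + 3) (by omega), ih (m + 2) (by omega),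
        ← hy.mul_eq_nextNumerator m] at hnext
      exact mul_right_cancel₀ (by simp [hy0]) hnext

end CommRing

variable {F : Type*} [Field F] {a b ν : F} {x : ℕ → F}

variable (a b ν) in
/-- The quotient of `x 7 * x 4 ^ 2 + x 6 ^ 2 * x 3` by `x 5`, written so that only `x 3` and `x 2`
appear in the denominator. -/
def pQuotient (x : ℕ → F) : F := pNumerator a b ν (fun i : Fin 7 => x i) / (x 3 ^ 3 * x 2 ^ 2)

variable (b ν) in
/-- The quotient by `x 5 ^ 2` of the polynomial in `x 8` and `pQuotient` appearing in
`IsSolution.mul_qQuotient`, written so that only `x 3` and `x 2` appear in the denominator. -/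
def qQuotient (x : ℕ → F) : F := qNumerator b ν (fun i : Fin 7 => x i) / (x 3 ^ 4 * x 2)

theorem IsSolution.mul_pQuotient (hx : IsSolution a b ν x) (hx0 : ∀ n, x n ≠ 0) :
    x 5 * pQuotient a b ν x = x 7 * x 4 ^ 2 + x 6 ^ 2 * x 3 := by
  have h7 := hx.mul_eq_nextNumerator 0
  simp only [zero_add] at h7
  rw [pQuotient, mul_div_assoc', div_eq_iff (by simp [hx0])]
  simp only [nextNumerator, Fin.coe_ofNat_eq_mod, Nat.reduceMod] at h7
  linear_combination -h7

theorem IsSolution.mul_qQuotient (hx : IsSolution a b ν x) (hx0 : ∀ n, x n ≠ 0) :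
    x 5 ^ 2 * qQuotient b ν x = x 8 * x 4 ^ 3 + pQuotient a b ν x ^ 2 + x 6 ^ 3 * x 2
      + ν * x 6 * x 4 * pQuotient a b ν x + b * x 6 ^ 2 * x 4 ^ 2 := by
  have hP : pQuotient a b ν x * (x 3 ^ 3 * x 2 ^ 2) = _ := div_mul_cancel₀ _ (by simp [hx0])
  have hQ : qQuotient b ν x * (x 3 ^ 4 * x 2) = _ := div_mul_cancel₀ _ (by simp [hx0])
  have h5P := hx.mul_pQuotient hx0
  have h8 := hx 1
  simp only [pNumerator, qNumerator, Fin.coe_ofNat_eq_mod, Nat.reduceMod] at hP hQ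
  simp only [recurrenceLHS, Fin.coe_ofNat_eq_mod, Nat.reduceMod, Nat.reduceAdd] at h8
  apply mul_right_cancel₀ (b := x 5 ^ 2 * x 3 ^ 4 * x 2) (by simp [hx0])
  linear_combination -(x 3 ^ 2 * x 2) * h8 + x 5 ^ 4 * hQ + x 6 * x 5 ^ 3 * hP
    - x 3 ^ 2 * x 2 * (x 3 ^ 2 * (x 7 * x 4 ^ 2 + x 6 ^ 2 * x 3 + x 5 * pQuotient a b ν x)
      + ν * x 6 * x 5 * x 4 * x 3 ^ 2 + x 6 * x 5 ^ 2 * x 3 * x 2) * h5P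

theorem IsSolution.mul_eq_nextNextNumerator (hx : IsSolution a b ν x) (hx0 : ∀ n, x n ≠ 0) :
    x 8 * (x 4 ^ 3 * x 3 ^ 6 * x 2 ^ 4) = nextNextNumerator a b ν fun i : Fin 7 => x i := by
  have hP : pQuotient a b ν x * (x 3 ^ 3 * x 2 ^ 2) = _ := div_mul_cancel₀ _ (by simp [hx0])
  have hQ : qQuotient b ν x * (x 3 ^ 4 * x 2) = _ := div_mul_cancel₀ _ (by simp [hx0])
  have h5Q := hx.mul_qQuotient hx0
  rw [nextNextNumerator, ← hP, ← hQ]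
  simp only [Fin.coe_ofNat_eq_mod, Nat.reduceMod]
  linear_combination -(x 3 ^ 6 * x 2 ^ 4) * h5Q

theorem IsSolution.apply_nine_mul (hx : IsSolution a b ν x) (hx0 : ∀ n, x n ≠ 0) :
    x 9 * (x 6 ^ 2 * x 4 ^ 2) = -(x 8 ^ 2 * x 5 * x 4 ^ 2 + x 8 * x 7 * x 4 * pQuotient a b ν x
      + x 7 ^ 2 * x 5 * qQuotient b ν x + ν * x 8 * x 7 * x 6 * x 4 ^ 2
      + a * x 7 * x 6 ^ 3 * x 4) := by
  have h5P := hx.mul_pQuotient hx0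
  have h5Q := hx.mul_qQuotient hx0
  have h9 := hx 2
  simp only [recurrenceLHS, Fin.coe_ofNat_eq_mod, Nat.reduceMod, Nat.reduceAdd] at h9
  apply mul_right_cancel₀ (b := x 5 ^ 3) (by simp [hx0])
  linear_combination h9 + (x 7 ^ 2 * (x 7 * x 4 ^ 2 + x 6 ^ 2 * x 3 + x 5 * pQuotient a b ν x)
    + ν * x 7 ^ 2 * x 6 * x 5 * x 4 + x 8 * x 7 * x 5 ^ 2 * x 4) * h5P + x 7 ^ 2 * x 5 ^ 2 * h5Q

theorem IsSolution.apply_ten_mul (hx : IsSolution a b ν x) (hx0 : ∀ n, x n ≠ 0) :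
    x 10 * (x 7 ^ 2 * x 6 ^ 3 * x 4) =
      x 8 * x 7 ^ 2 * (x 8 ^ 2 * x 4 ^ 2 + x 7 ^ 2 * qQuotient b ν x)
      - (x 9 ^ 2 * x 6 ^ 4 + 2 * x 9 * x 8 ^ 2 * x 6 ^ 2 * x 5 + x 8 ^ 4 * x 5 ^ 2
        + 2 * x 8 ^ 3 * x 7 ^ 2 * x 4
        + ν * (x 9 * x 8 * x 7 * x 6 ^ 3 + x 8 ^ 3 * x 7 * x 6 * x 5)
        + b * x 8 ^ 2 * x 7 ^ 2 * x 6 ^ 2) * x 4 := by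
  have h5P := hx.mul_pQuotient hx0
  have h9 := hx.apply_nine_mul hx0
  have h10 := hx 3
  simp only [recurrenceLHS, Fin.coe_ofNat_eq_mod, Nat.reduceMod, Nat.reduceAdd] at h10
  apply mul_right_cancel₀ (b := x 5 ^ 2 * x 4) (by simp [hx0])
  linear_combination x 4 ^ 2 * h10 + x 8 ^ 2 * x 7 ^ 3 * x 4 ^ 2 * h5P
    - x 8 * x 7 ^ 2 * x 5 * x 4 * h9

end Recurrence

section TauSequence

theorem forall_algebraMap_X {p : FracK → Prop} (ha : p va) (hb : p vb) (hν : p vnu)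
    (ht : ∀ i, p (tv i)) (i : Fin 10) : p (algebraMap PolyR FracK (X i)) := by
  fin_cases i
  exacts [ha, hb, hν, ht 0, ht 1, ht 2, ht 3, ht 4, ht 5, ht 6]

theorem tv_ne_zero (i : Fin 7) : tv i ≠ 0 :=
  algebraMap_X_ne_zero _

/-- The group of automorphisms of `K` that fix the parameters `a`, `b`, `ν`. -/
def parameterFixer : Subgroup (FracK ≃ₐ[ℤ] FracK) :=
  fixingSubgroup (FracK ≃ₐ[ℤ] FracK) {va, vb, vnu}

theorem mem_parameterFixer_iff {Φ : FracK ≃ₐ[ℤ] FracK} :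
    Φ ∈ parameterFixer ↔ Φ va = va ∧ Φ vb = vb ∧ Φ vnu = vnu := by
  simp [parameterFixer, mem_fixingSubgroup_iff]

theorem map_recurrenceLHS_of_mem_parameterFixer {Φ : FracK ≃ₐ[ℤ] FracK}
    (hΦ : Φ ∈ parameterFixer) (x : Fin 8 → FracK) :
    Φ (recurrenceLHS va vb vnu x) = recurrenceLHS va vb vnu fun i => Φ (x i) := by
  obtain ⟨ha, hb, hν⟩ := mem_parameterFixer_iff.mp hΦ
  rw [map_recurrenceLHS, ha, hb, hν]

theorem exists_mem_parameterFixer_apply_tv_eq {y : Fin 7 → FracK}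
    (hy : ∀ i, tv i ∈ Subfield.closure ({va, vb, vnu} ∪ Set.range y)) :
    ∃ Φ ∈ parameterFixer, ∀ i, Φ (tv i) = y i := by
  let v : Fin 10 → FracK := ![va, vb, vnu, y 0, y 1, y 2, y 3, y 4, y 5, y 6]
  have hsub : {va, vb, vnu} ∪ Set.range y ⊆ Set.range v := by
    rintro _ ((rfl | rfl | rfl) | ⟨i, rfl⟩)
    · exact ⟨0, rfl⟩
    · exact ⟨1, rfl⟩
    · exact ⟨2, rfl⟩
    · exact ⟨i.natAdd 3, by fin_cases i <;> rfl⟩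
  have hv : ∀ i, algebraMap PolyR FracK (X i) ∈
      Subfield.closure (Set.range (algebraMap ℤ FracK) ∪ Set.range v) :=
    forall_algebraMap_X
      (Subfield.subset_closure (Or.inr ⟨0, rfl⟩)) (Subfield.subset_closure (Or.inr ⟨1, rfl⟩))
      (Subfield.subset_closure (Or.inr ⟨2, rfl⟩))
      fun i => Subfield.closure_mono (hsub.trans Set.subset_union_right) (hy i)
  obtain ⟨Φ, hΦ⟩ := exists_algEquiv_apply_X_eq hv
  refine ⟨Φ, mem_parameterFixer_iff.mpr ⟨hΦ 0, hΦ 1, hΦ 2⟩, fun i => ?_⟩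
  fin_cases i
  exacts [hΦ 3, hΦ 4, hΦ 5, hΦ 6, hΦ 7, hΦ 8, hΦ 9]

/-- The terms `t₀, …, t₆, t₇`, where `t₇` is determined by the recurrence. -/
def initialWindow : Fin 8 → FracK :=
  Fin.snoc (α := fun _ => FracK) tv
    (nextNumerator va vb vnu tv / (tv 4 ^ 2 * tv 3 ^ 3 * tv 2 ^ 2))

theorem initialWindow_castSucc (i : Fin 7) : initialWindow i.castSucc = tv i :=
  Fin.snoc_castSucc (α := fun _ => FracK) _ _ i

theorem recurrenceLHS_initialWindow : recurrenceLHS va vb vnu initialWindow = 0 := by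
  have hlast : initialWindow 7 =
      nextNumerator va vb vnu tv / (tv 4 ^ 2 * tv 3 ^ 3 * tv 2 ^ 2) :=
    Fin.snoc_last (α := fun _ => FracK) _ _
  have hwindow : (fun i : Fin 7 => initialWindow i.castSucc) = tv :=
    funext initialWindow_castSucc
  have h2 : initialWindow 2 = tv 2 := initialWindow_castSucc 2
  have h3 : initialWindow 3 = tv 3 := initialWindow_castSucc 3
  have h4 : initialWindow 4 = tv 4 := initialWindow_castSucc 4
  rw [recurrenceLHS_eq_sub, hwindow, hlast, h2, h3, h4,
    div_mul_cancel₀ _ (by simp [tv_ne_zero]), sub_self]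

-- The reversal symmetry of the recurrence expresses `t₀` through `t₁, …, t₇`.
theorem tv_mem_closure_initialWindow_succ (i : Fin 7) :
    tv i ∈ Subfield.closure
      ({va, vb, vnu} ∪ Set.range fun j : Fin 7 => initialWindow j.succ) := by
  set T := Subfield.closure ({va, vb, vnu} ∪ Set.range fun j : Fin 7 => initialWindow j.succ)
  have hsucc (j : Fin 7) : initialWindow j.succ ∈ T := Subfield.subset_closure (Or.inr ⟨j, rfl⟩)
  rw [← initialWindow_castSucc]
  cases i using Fin.cases with
  | succ j => exact hsucc j.castSucc
  | zero =>
    have hrec := recurrenceLHS_initialWindow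
    rw [← recurrenceLHS_rev, recurrenceLHS_eq_sub, sub_eq_zero] at hrec
    simp only [Fin.rev_castSucc, Fin.reduceRev] at hrec
    have h3 : initialWindow 3 = tv 3 := initialWindow_castSucc 3
    have h4 : initialWindow 4 = tv 4 := initialWindow_castSucc 4
    have h5 : initialWindow 5 = tv 5 := initialWindow_castSucc 5
    refine (eq_div_of_mul_eq (by simp [h3, h4, h5, tv_ne_zero]) hrec) ▸ div_mem ?_ ?_
    · exact nextNumerator_mem (T := T.toSubring)
        (Subfield.subset_closure (Or.inl (Or.inl rfl)))
        (Subfield.subset_closure (Or.inl (Or.inr (Or.inl rfl))))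
        (Subfield.subset_closure (Or.inl (Or.inr (Or.inr rfl)))) fun i => hsucc i.rev
    · exact mul_mem (mul_mem (pow_mem (hsucc 2) 2) (pow_mem (hsucc 3) 3)) (pow_mem (hsucc 4) 2)

theorem exists_shift : ∃ Φ ∈ parameterFixer,
    ∀ i : Fin 7, Φ (initialWindow i.castSucc) = initialWindow i.succ := by
  simpa only [initialWindow_castSucc] using
    exists_mem_parameterFixer_apply_tv_eq tv_mem_closure_initialWindow_succ

theorem exists_reversal : ∃ Φ ∈ parameterFixer, ∀ i, Φ (tv i) = tv i.rev :=
  exists_mem_parameterFixer_apply_tv_eq fun i =>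
    Subfield.subset_closure (Or.inr ⟨i.rev, congrArg tv i.rev_rev⟩)

/-- The automorphism of `K` that fixes the parameters and maps `tᵢ` to `tᵢ₊₁` for `i ≤ 6`. -/
def shift : FracK ≃ₐ[ℤ] FracK := exists_shift.choose

/-- The automorphism of `K` that fixes the parameters and maps `tᵢ` to `t₆₋ᵢ`. -/
def reversal : FracK ≃ₐ[ℤ] FracK := exists_reversal.choose

theorem shift_mem_parameterFixer : shift ∈ parameterFixer := exists_shift.choose_spec.1

theorem shift_initialWindow_castSucc (i : Fin 7) :
    shift (initialWindow i.castSucc) = initialWindow i.succ :=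
  exists_shift.choose_spec.2 i

theorem reversal_mem_parameterFixer : reversal ∈ parameterFixer := exists_reversal.choose_spec.1

theorem reversal_tv (i : Fin 7) : reversal (tv i) = tv i.rev := exists_reversal.choose_spec.2 i

/-- The sequence generated by the recurrence from `t₀, …, t₆`, as an orbit of the shift. -/
def tau (n : ℤ) : FracK := (shift ^ n) (tv 0)

theorem shift_zpow_tau (m n : ℤ) : (shift ^ m) (tau n) = tau (m + n) := by
  rw [tau, tau, zpow_add, AlgEquiv.mul_apply]

theorem tau_add_one (n : ℤ) : tau (n + 1) = shift (tau n) := by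
  rw [add_comm, ← shift_zpow_tau, zpow_one]

theorem tau_eq_initialWindow (i : Fin 8) : tau (i : ℕ) = initialWindow i := by
  induction i using Fin.induction with
  | zero => exact (initialWindow_castSucc 0).symm
  | succ i ih =>
    rw [← shift_initialWindow_castSucc, ← ih, ← tau_add_one]
    simp

theorem tau_eq_tv (i : Fin 7) : tau (i : ℕ) = tv i :=
  (tau_eq_initialWindow i.castSucc).trans (initialWindow_castSucc i)

theorem tau_ne_zero (n : ℤ) : tau n ≠ 0 :=
  (map_ne_zero (shift ^ n)).mpr (tv_ne_zero 0)

theorem recurrenceLHS_tau (n : ℤ) :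
    recurrenceLHS va vb vnu (fun i : Fin 8 => tau (n + (i : ℕ))) = 0 := by
  simp only [← shift_zpow_tau n, tau_eq_initialWindow]
  rw [← map_recurrenceLHS_of_mem_parameterFixer (zpow_mem shift_mem_parameterFixer n),
    recurrenceLHS_initialWindow, map_zero]

/-- The terms of `tau` with non-negative index, to which the results on `IsSolution` apply. -/
def natTau (n : ℕ) : FracK := tau n

theorem natTau_ne_zero (n : ℕ) : natTau n ≠ 0 := tau_ne_zero n

theorem natTau_eq_tv (i : Fin 7) : natTau i = tv i := tau_eq_tv i

theorem shift_pow_natTau (m n : ℕ) : (shift ^ m) (natTau n) = natTau (m + n) := by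
  simpa [natTau] using shift_zpow_tau m n

theorem isSolution_natTau : IsSolution va vb vnu natTau := fun n => by
  simpa [natTau] using recurrenceLHS_tau n

theorem isSolution_tau_six_sub : IsSolution va vb vnu fun n : ℕ => tau (6 - n) := fun n => by
  have hrev := recurrenceLHS_tau (-1 - n)
  rw [← recurrenceLHS_rev] at hrev
  convert hrev using 4 with i
  rw [Fin.val_rev]
  omega

theorem isSolution_reversal_natTau : IsSolution va vb vnu fun n : ℕ => reversal (natTau n) :=
    fun n => by
  rw [← map_recurrenceLHS_of_mem_parameterFixer reversal_mem_parameterFixer, isSolution_natTau,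
    map_zero]

theorem reversal_natTau (n : ℕ) : reversal (natTau n) = tau (6 - n) := by
  refine isSolution_reversal_natTau.eq_of_eq_of_lt isSolution_tau_six_sub (fun n => tau_ne_zero _)
    (fun i hi => ?_) n
  have hrev : ((Fin.rev ⟨i, hi⟩ : Fin 7) : ℕ) = (6 - i : ℤ) := by
    simp only [Fin.val_rev]
    omega
  rw [← hrev, tau_eq_tv, ← reversal_tv, ← natTau_eq_tv]

end TauSequence

section LaurentProperty

/-- The Laurent ring `ℤ[a, b, ν, t₀, t₁, t₂^{±1}, t₃^{±1}, t₄^{±1}, t₅, t₆]` inside `K`; the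
variable `tᵢ` has index `i + 3`. -/
abbrev laurentRing : Subalgebra PolyR FracK := laurentSubalgebra ℤ FracK {5, 6, 7}

/-- The local ring of `ℤ[a, b, ν, t₀, …, t₆]` at the prime ideal `(t₅)`, inside `K`. -/
abbrev localRing : Subalgebra PolyR FracK :=
  localSubalgebra FracK (X_prime (R := ℤ) (i := (8 : Fin 10)))

theorem laurentRing_le_localRing : laurentRing ≤ localRing :=
  laurentSubalgebra_le_localSubalgebra (by decide)

theorem map_mem_of_mem_laurentRing {Φ : FracK ≃ₐ[ℤ] FracK} (hΦ : Φ ∈ parameterFixer)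
    {T : Subalgebra PolyR FracK} (ht : ∀ i, Φ (tv i) ∈ T) (h2 : (Φ (tv 2))⁻¹ ∈ T)
    (h3 : (Φ (tv 3))⁻¹ ∈ T) (h4 : (Φ (tv 4))⁻¹ ∈ T) {x : FracK} (hx : x ∈ laurentRing) :
    Φ x ∈ T := by
  obtain ⟨ha, hb, hν⟩ := mem_parameterFixer_iff.mp hΦ
  have hX := forall_algebraMap_X (p := fun x => Φ x ∈ T) (ha.symm ▸ algebraMap_mem T _)
    (hb.symm ▸ algebraMap_mem T _) (hν.symm ▸ algebraMap_mem T _) ht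
  refine map_mem_of_mem_laurentSubalgebra (f := (Φ : FracK →+* FracK)) (T := T.toSubring)
    (fun r => by simp) hX ?_ hx
  rintro i (rfl | rfl | rfl)
  exacts [h2, h3, h4]

theorem natTau_mem_laurentRing_of_lt_seven {n : ℕ} (hn : n < 7) : natTau n ∈ laurentRing :=
  natTau_eq_tv ⟨n, hn⟩ ▸ algebraMap_mem laurentRing _

theorem inv_natTau_mem_laurentRing {n : ℕ} (hn : n ∈ Set.Icc 2 4) :
    (natTau n)⁻¹ ∈ laurentRing := by
  obtain ⟨h2, h4⟩ := hn
  have hmem : (⟨n + 3, by omega⟩ : Fin 10) ∈ ({5, 6, 7} : Set (Fin 10)) := by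
    interval_cases n <;> simp
  exact natTau_eq_tv ⟨n, by omega⟩ ▸ inv_X_mem_laurentSubalgebra hmem

/-- The initial terms `t₀, …, t₆` as polynomials. -/
def initialPoly (i : Fin 7) : PolyR := X ⟨i + 3, by omega⟩

theorem natTau_eq_algebraMap_initialPoly :
    (fun i : Fin 7 => natTau i) = fun i => algebraMap PolyR FracK (initialPoly i) :=
  funext natTau_eq_tv

theorem pQuotient_natTau_mem_laurentRing : pQuotient va vb vnu natTau ∈ laurentRing := by
  have hnum := map_pNumerator (algebraMap PolyR FracK) (X 0) (X 1) (X 2) initialPoly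
  rw [← natTau_eq_algebraMap_initialPoly] at hnum
  have h2 := inv_natTau_mem_laurentRing (n := 2) (by decide)
  have h3 := inv_natTau_mem_laurentRing (n := 3) (by decide)
  refine mul_mem (hnum ▸ algebraMap_mem _ _) ?_
  rw [mul_inv, ← inv_pow, ← inv_pow]
  exact mul_mem (pow_mem h3 3) (pow_mem h2 2)

theorem qQuotient_natTau_mem_laurentRing : qQuotient vb vnu natTau ∈ laurentRing := by
  have hnum := map_qNumerator (algebraMap PolyR FracK) (X 1) (X 2) initialPoly
  rw [← natTau_eq_algebraMap_initialPoly] at hnum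
  have h2 := inv_natTau_mem_laurentRing (n := 2) (by decide)
  have h3 := inv_natTau_mem_laurentRing (n := 3) (by decide)
  refine mul_mem (hnum ▸ algebraMap_mem _ _) ?_
  rw [mul_inv, ← inv_pow]
  exact mul_mem (pow_mem h3 4) h2

theorem natTau_seven_mul : natTau 7 * (natTau 4 ^ 2 * natTau 3 ^ 3 * natTau 2 ^ 2) =
    algebraMap PolyR FracK (nextNumerator (X 0) (X 1) (X 2) initialPoly) := by
  rw [map_nextNumerator, ← natTau_eq_algebraMap_initialPoly]
  have h := isSolution_natTau.mul_eq_nextNumerator 0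
  simp only [zero_add] at h
  exact h

theorem natTau_eight_mul : natTau 8 * (natTau 4 ^ 3 * natTau 3 ^ 6 * natTau 2 ^ 4) =
    algebraMap PolyR FracK (nextNextNumerator (X 0) (X 1) (X 2) initialPoly) := by
  rw [map_nextNextNumerator, ← natTau_eq_algebraMap_initialPoly]
  exact isSolution_natTau.mul_eq_nextNextNumerator natTau_ne_zero

theorem inv_prod_pow_mem_laurentRing (i j k : ℕ) :
    (natTau 4 ^ i * natTau 3 ^ j * natTau 2 ^ k)⁻¹ ∈ laurentRing := by
  have h2 := inv_natTau_mem_laurentRing (n := 2) (by decide)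
  have h3 := inv_natTau_mem_laurentRing (n := 3) (by decide)
  have h4 := inv_natTau_mem_laurentRing (n := 4) (by decide)
  rw [mul_inv, mul_inv, ← inv_pow, ← inv_pow, ← inv_pow]
  exact mul_mem (mul_mem (pow_mem h4 i) (pow_mem h3 j)) (pow_mem h2 k)

theorem prod_pow_mem_laurentRing (i j k : ℕ) :
    natTau 4 ^ i * natTau 3 ^ j * natTau 2 ^ k ∈ laurentRing := by
  have h2 := natTau_mem_laurentRing_of_lt_seven (n := 2) (by decide)
  have h3 := natTau_mem_laurentRing_of_lt_seven (n := 3) (by decide)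
  have h4 := natTau_mem_laurentRing_of_lt_seven (n := 4) (by decide)
  exact mul_mem (mul_mem (pow_mem h4 i) (pow_mem h3 j)) (pow_mem h2 k)

theorem natTau_seven_mem_laurentRing : natTau 7 ∈ laurentRing :=
  mem_of_mul_eq_of_inv_mem (by simp [natTau_ne_zero]) (inv_prod_pow_mem_laurentRing 2 3 2)
    (algebraMap_mem _ _) natTau_seven_mul

theorem natTau_eight_mem_laurentRing : natTau 8 ∈ laurentRing :=
  mem_of_mul_eq_of_inv_mem (by simp [natTau_ne_zero]) (inv_prod_pow_mem_laurentRing 3 6 4)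
    (algebraMap_mem _ _) natTau_eight_mul

/-- A point of the hyperplane `t₅ = 0` at which the numerators of `t₇` and `t₈` do not vanish. -/
def specialPoint : Fin 10 → ℤ := ![0, 0, 0, 0, 0, 1, 1, 1, 0, 1]

theorem inv_natTau_six_mem_localRing : (natTau 6)⁻¹ ∈ localRing :=
  natTau_eq_tv 6 ▸ laurentSubalgebra_le_localSubalgebra (I := {9}) (by decide)
    (inv_X_mem_laurentSubalgebra rfl)

theorem inv_natTau_seven_mem_localRing : (natTau 7)⁻¹ ∈ localRing := by
  have heval : eval specialPoint (nextNumerator (X 0) (X 1) (X 2) initialPoly) = -1 := by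
    rw [map_nextNumerator]
    simp only [eval_X, initialPoly]
    decide
  exact inv_mem_localSubalgebra_of_mul_eq _
    (not_X_dvd_of_eval_ne_zero (v := specialPoint) rfl (by simp [heval]))
    (laurentRing_le_localRing (prod_pow_mem_laurentRing 2 3 2)) natTau_seven_mul

theorem inv_natTau_eight_mem_localRing : (natTau 8)⁻¹ ∈ localRing := by
  have heval : eval specialPoint (nextNextNumerator (X 0) (X 1) (X 2) initialPoly) = -1 := by
    rw [map_nextNextNumerator]
    simp only [eval_X, initialPoly]
    decide
  exact inv_mem_localSubalgebra_of_mul_eq _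
    (not_X_dvd_of_eval_ne_zero (v := specialPoint) rfl (by simp [heval]))
    (laurentRing_le_localRing (prod_pow_mem_laurentRing 3 6 4)) natTau_eight_mul

theorem shift_mem_of_mem_laurentRing {x : FracK} (hx : x ∈ laurentRing) :
    shift x ∈ laurentSubalgebra ℤ FracK (insert 8 {5, 6, 7} : Set (Fin 10)) := by
  have hle : laurentRing ≤ laurentSubalgebra ℤ FracK (insert 8 {5, 6, 7} : Set (Fin 10)) :=
    laurentSubalgebra_mono (Set.subset_insert _ _)
  have hshift (i : Fin 7) : shift (tv i) = natTau (1 + i) := by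
    rw [← shift_pow_natTau, natTau_eq_tv, pow_one]
  have htv (i : Fin 7) : shift (tv i) ∈ laurentRing := by
    rw [hshift]
    obtain hi | hi := lt_or_ge (i : ℕ) 6
    · exact natTau_mem_laurentRing_of_lt_seven (by omega)
    · rw [show 1 + (i : ℕ) = 7 by omega]
      exact natTau_seven_mem_laurentRing
  refine map_mem_of_mem_laurentRing shift_mem_parameterFixer (fun i => hle (htv i)) ?_ ?_ ?_ hx
  · exact hshift 2 ▸ hle (inv_natTau_mem_laurentRing (by decide))
  · exact hshift 3 ▸ hle (inv_natTau_mem_laurentRing (by decide))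
  · exact hshift 4 ▸ natTau_eq_tv 5 ▸ inv_X_mem_laurentSubalgebra (Set.mem_insert _ _)

theorem natTau_succ_mem_laurentRing {n : ℕ} (hn : natTau n ∈ laurentRing)
    (hn' : natTau (n + 1) ∈ localRing) : natTau (n + 1) ∈ laurentRing := by
  refine mem_laurentSubalgebra_of_mem_insert ?_ hn'
  rw [add_comm, ← shift_pow_natTau, pow_one]
  exact shift_mem_of_mem_laurentRing hn

theorem natTau_nine_mem_laurentRing : natTau 9 ∈ laurentRing := by
  have ha : va ∈ laurentRing := algebraMap_mem _ _
  have hν : vnu ∈ laurentRing := algebraMap_mem _ _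
  have hP := pQuotient_natTau_mem_laurentRing
  have hQ := qQuotient_natTau_mem_laurentRing
  have h4 := natTau_mem_laurentRing_of_lt_seven (n := 4) (by decide)
  have h5 := natTau_mem_laurentRing_of_lt_seven (n := 5) (by decide)
  have h6 := natTau_mem_laurentRing_of_lt_seven (n := 6) (by decide)
  have h7 := natTau_seven_mem_laurentRing
  have h8 := natTau_eight_mem_laurentRing
  refine natTau_succ_mem_laurentRing h8 (mem_of_mul_eq_of_inv_mem (by simp [natTau_ne_zero]) ?_
    (laurentRing_le_localRing ?_) (isSolution_natTau.apply_nine_mul natTau_ne_zero))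
  · rw [mul_inv, ← inv_pow, ← inv_pow]
    exact mul_mem (pow_mem inv_natTau_six_mem_localRing 2)
      (pow_mem (laurentRing_le_localRing (inv_natTau_mem_laurentRing (by decide))) 2)
  · apply_rules [pow_mem, neg_mem, add_mem, mul_mem]

theorem natTau_ten_mem_laurentRing : natTau 10 ∈ laurentRing := by
  have hb : vb ∈ laurentRing := algebraMap_mem _ _
  have hν : vnu ∈ laurentRing := algebraMap_mem _ _
  have hQ := qQuotient_natTau_mem_laurentRing
  have h4 := natTau_mem_laurentRing_of_lt_seven (n := 4) (by decide)
  have h5 := natTau_mem_laurentRing_of_lt_seven (n := 5) (by decide)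
  have h6 := natTau_mem_laurentRing_of_lt_seven (n := 6) (by decide)
  have h7 := natTau_seven_mem_laurentRing
  have h8 := natTau_eight_mem_laurentRing
  have h9 := natTau_nine_mem_laurentRing
  refine natTau_succ_mem_laurentRing h9 (mem_of_mul_eq_of_inv_mem (by simp [natTau_ne_zero]) ?_
    (laurentRing_le_localRing ?_) (isSolution_natTau.apply_ten_mul natTau_ne_zero))
  · rw [mul_inv, mul_inv, ← inv_pow, ← inv_pow]
    exact mul_mem (mul_mem (pow_mem inv_natTau_seven_mem_localRing 2)
      (pow_mem inv_natTau_six_mem_localRing 3))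
      (laurentRing_le_localRing (inv_natTau_mem_laurentRing (by decide)))
  · refine sub_mem ?_ (mul_mem (add_mem (add_mem ?_ ?_) ?_) h4) <;>
      apply_rules [pow_mem, ofNat_mem, add_mem, mul_mem]

theorem natTau_mem_laurentRing_of_le_ten {n : ℕ} (hn : n ≤ 10) : natTau n ∈ laurentRing := by
  obtain hn7 | hn7 := lt_or_ge n 7
  · exact natTau_mem_laurentRing_of_lt_seven hn7
  · interval_cases n
    exacts [natTau_seven_mem_laurentRing, natTau_eight_mem_laurentRing,
      natTau_nine_mem_laurentRing, natTau_ten_mem_laurentRing]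

theorem shift_pow_four_mem_of_mem_laurentRing {x : FracK} (hx : x ∈ laurentRing) :
    (shift ^ 4) x ∈ localRing := by
  have hshift (i : Fin 7) : (shift ^ 4) (tv i) = natTau (4 + i) := by
    rw [← shift_pow_natTau, natTau_eq_tv]
  refine map_mem_of_mem_laurentRing (pow_mem shift_mem_parameterFixer 4) (fun i => ?_) ?_ ?_ ?_ hx
  · exact hshift i ▸ laurentRing_le_localRing (natTau_mem_laurentRing_of_le_ten (by omega))
  · exact hshift 2 ▸ inv_natTau_six_mem_localRing
  · exact hshift 3 ▸ inv_natTau_seven_mem_localRing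
  · exact hshift 4 ▸ inv_natTau_eight_mem_localRing

theorem natTau_mem_laurentRing (n : ℕ) : natTau n ∈ laurentRing := by
  induction n using Nat.strong_induction_on with
  | _ n ih =>
    obtain hn | hn := le_or_gt n 10
    · exact natTau_mem_laurentRing_of_le_ten hn
    · obtain ⟨m, rfl⟩ := Nat.exists_eq_add_of_le (show 4 ≤ n by omega)
      have hloc : natTau (4 + m) ∈ localRing :=
        shift_pow_natTau 4 m ▸ shift_pow_four_mem_of_mem_laurentRing (ih m (by omega))
      rw [show 4 + m = 3 + m + 1 by omega] at hloc ⊢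
      exact natTau_succ_mem_laurentRing (ih _ (by omega)) hloc

theorem reversal_mem_laurentRing {x : FracK} (hx : x ∈ laurentRing) :
    reversal x ∈ laurentRing := by
  refine map_mem_of_mem_laurentRing reversal_mem_parameterFixer (fun i => ?_) ?_ ?_ ?_ hx
  · exact reversal_tv i ▸ algebraMap_mem laurentRing _
  · rw [reversal_tv]; exact inv_X_mem_laurentSubalgebra (i := 7) (by decide)
  · rw [reversal_tv]; exact inv_X_mem_laurentSubalgebra (i := 6) (by decide)
  · rw [reversal_tv]; exact inv_X_mem_laurentSubalgebra (i := 5) (by decide)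

theorem tau_mem_laurentRing (n : ℤ) : tau n ∈ laurentRing := by
  obtain hn | hn := le_total 0 n
  · lift n to ℕ using hn
    exact natTau_mem_laurentRing n
  · obtain ⟨m, hm⟩ := Int.eq_ofNat_of_zero_le (show 0 ≤ 6 - n by omega)
    rw [show n = 6 - m by omega, ← reversal_natTau]
    exact reversal_mem_laurentRing (natTau_mem_laurentRing m)

theorem mem_closure_of_mem_laurentRing {x : FracK} (hx : x ∈ laurentRing) :
    x ∈ Subring.closure ({va, vb, vnu, tv 0, tv 1, tv 2, (tv 2)⁻¹, tv 3, (tv 3)⁻¹,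
      tv 4, (tv 4)⁻¹, tv 5, tv 6} : Set FracK) := by
  refine map_mem_of_mem_laurentSubalgebra (f := RingHom.id FracK) (fun r => by simp)
    (forall_algebraMap_X ?_ ?_ ?_ fun i => ?_) ?_ hx
  on_goal 4 => fin_cases i
  on_goal 11 => rintro i (rfl | rfl | rfl)
  all_goals exact Subring.subset_closure (by simp [tv])

end LaurentProperty

theorem stmt4 :
    ∃ τ : ℤ → FracK,
      (∀ i : Fin 7, τ (i.1 : ℤ) = tv i) ∧
      (∀ n : ℤ, τ n ≠ 0) ∧
      (∀ n : ℤ,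
        τ (n + 7) * τ (n + 4) ^ 2 * τ (n + 3) ^ 3 * τ (n + 2) ^ 2
          + τ (n + 6) ^ 2 * τ (n + 3) ^ 4 * τ (n + 2) ^ 2
          + 2 * τ (n + 6) * τ (n + 5) ^ 2 * τ (n + 3) ^ 2 * τ (n + 2) ^ 3
          + τ (n + 6) * τ (n + 5) * τ (n + 4) ^ 2 * τ (n + 3) ^ 2 * τ (n + 2) * τ (n + 1)
          + τ (n + 5) ^ 4 * τ (n + 2) ^ 4
          + 2 * τ (n + 5) ^ 3 * τ (n + 4) ^ 2 * τ (n + 2) ^ 2 * τ (n + 1)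
          + τ (n + 5) ^ 2 * τ (n + 4) ^ 4 * τ (n + 1) ^ 2
          + τ (n + 5) ^ 2 * τ (n + 4) ^ 3 * τ (n + 3) ^ 2 * τ n
          + vnu * (τ (n + 6) * τ (n + 5) * τ (n + 4) * τ (n + 3) ^ 3 * τ (n + 2) ^ 2
              + τ (n + 5) ^ 3 * τ (n + 4) * τ (n + 3) * τ (n + 2) ^ 3
              + τ (n + 5) ^ 2 * τ (n + 4) ^ 3 * τ (n + 3) * τ (n + 2) * τ (n + 1))
          + vb * τ (n + 5) ^ 2 * τ (n + 4) ^ 2 * τ (n + 3) ^ 2 * τ (n + 2) ^ 2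
          + va * τ (n + 5) * τ (n + 4) ^ 3 * τ (n + 3) ^ 3 * τ (n + 2) = 0) ∧
      (∀ n : ℤ, τ n ∈ Subring.closure
        ({va, vb, vnu, tv 0, tv 1, tv 2, (tv 2)⁻¹, tv 3, (tv 3)⁻¹,
          tv 4, (tv 4)⁻¹, tv 5, tv 6} : Set FracK)) := by
  refine ⟨tau, tau_eq_tv, tau_ne_zero, fun n => ?_,
    fun n => mem_closure_of_mem_laurentRing (tau_mem_laurentRing n)⟩
  simpa [recurrenceLHS] using recurrenceLHS_tau n

end
end

section
/- Let w : ℤ → ℂ∖{0} and let p, q, r, ρ : ℤ → ℂ be sequences satisfying, for all n ∈ ℤ: w_{n+1} = −(2p_n − q_n + r_n)/2, p_{n+1} = q_n − p_n, q_{n+1} = −ρ_n / w_{n+1}, r_{n+1} = −2 w_{n+1}, ρ_{n+1} = −w_{n+1} q_n (these are the genus-1 Volterra map recursion relations, with p_n, q_n the coefficients of x in P_n, Q_n and r_n, ρ_n the coefficients of x, x² in R_n). Set c₁ := 2(p₀ + r₀). Then for all n ∈ ℤ: w_{n+1}(2w_{n+2} + 2w_{n+1} + c₁) = w_n(2w_n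 + 2w_{n−1} + c₁). -/
/-!
The map conserves `p n + r n`. Since `r n = -2 * w n`, this expresses `p n`, and then
`q n = p (n + 1) + p n`, through `w` and the conserved value. Eliminating `ρ` gives
`w (n + 1) * q (n + 1) = w n * q (n - 1)`, which becomes the claimed recurrence for `w`.
-/

/-- A two-sided orbit of the genus-1 Volterra map, in the coordinates `P = 1 + p x`, `Q = 2 + q x`,
`R = r x + ρ x²`. The two relations that define `w` and `q` by a division are stated with the
denominator cleared, so that they make sense over any commutative ring. -/
structure IsVolterraOrbit {A : Type*} [CommRing A] (w p q r ρ : ℤ → A) : Prop where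
  two_mul_w_succ : ∀ n, 2 * w (n + 1) = -(2 * p n - q n + r n)
  p_succ : ∀ n, p (n + 1) = q n - p n
  w_succ_mul_q_succ : ∀ n, w (n + 1) * q (n + 1) = -ρ n
  r_succ : ∀ n, r (n + 1) = -2 * w (n + 1)
  rho_succ : ∀ n, ρ (n + 1) = -w (n + 1) * q n

namespace IsVolterraOrbit

variable {A : Type*} [CommRing A] {w p q r ρ : ℤ → A}

theorem periodic_p_add_r (h : IsVolterraOrbit w p q r ρ) : Function.Periodic (p + r) 1 := by
  intro n
  simp only [Pi.add_apply]
  linear_combination h.p_succ n + h.r_succ n - h.two_mul_w_succ n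

theorem p_add_r_eq (h : IsVolterraOrbit w p q r ρ) (n : ℤ) : p n + r n = p 0 + r 0 := by
  simpa using h.periodic_p_add_r.int_mul_eq n

theorem r_eq (h : IsVolterraOrbit w p q r ρ) (n : ℤ) : r n = -2 * w n := by
  simpa using h.r_succ (n - 1)

theorem p_eq (h : IsVolterraOrbit w p q r ρ) (n : ℤ) : p n = p 0 + r 0 + 2 * w n := by
  linear_combination h.p_add_r_eq n - h.r_eq n

theorem q_eq (h : IsVolterraOrbit w p q r ρ) (n : ℤ) :
    q n = 2 * w (n + 1) + 2 * w n + 2 * (p 0 + r 0) := by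
  linear_combination h.p_eq (n + 1) + h.p_eq n - h.p_succ n

theorem w_succ_mul_q_succ_eq (h : IsVolterraOrbit w p q r ρ) (n : ℤ) :
    w (n + 1) * q (n + 1) = w n * q (n - 1) := by
  have rho_eq : ρ n = -w n * q (n - 1) := by simpa using h.rho_succ (n - 1)
  rw [h.w_succ_mul_q_succ, rho_eq, neg_mul, neg_neg]

end IsVolterraOrbit

theorem stmt7_general {A : Type*} [CommRing A] {w p q r ρ : ℤ → A}
    (h : IsVolterraOrbit w p q r ρ) {c1 : A} (hc1 : c1 = 2 * (p 0 + r 0)) (n : ℤ) :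
    w (n + 1) * (2 * w (n + 2) + 2 * w (n + 1) + c1)
      = w n * (2 * w n + 2 * w (n - 1) + c1) := by
  have q_succ : q (n + 1) = 2 * w (n + 2) + 2 * w (n + 1) + c1 := by
    rw [h.q_eq, hc1, add_assoc n 1 1, one_add_one_eq_two]
  have q_pred : q (n - 1) = 2 * w n + 2 * w (n - 1) + c1 := by
    rw [h.q_eq, hc1, sub_add_cancel]
  rw [← q_succ, ← q_pred, h.w_succ_mul_q_succ_eq]

theorem stmt7 (w : ℤ → ℂ) (hw0 : ∀ n : ℤ, w n ≠ 0)
    (p q r ρ : ℤ → ℂ)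
    (hwrec : ∀ n : ℤ, w (n + 1) = -(2 * p n - q n + r n) / 2)
    (hp : ∀ n : ℤ, p (n + 1) = q n - p n)
    (hq : ∀ n : ℤ, q (n + 1) = -ρ n / w (n + 1))
    (hr : ∀ n : ℤ, r (n + 1) = -2 * w (n + 1))
    (hρ : ∀ n : ℤ, ρ (n + 1) = -(w (n + 1)) * q n)
    (c1 : ℂ) (hc1 : c1 = 2 * (p 0 + r 0)) :
    ∀ n : ℤ,
      w (n + 1) * (2 * w (n + 2) + 2 * w (n + 1) + c1)
        = w n * (2 * w n + 2 * w (n - 1) + c1) :=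
  stmt7_general ⟨fun n ↦ by rw [hwrec, mul_div_cancel₀ _ two_ne_zero], hp,
    fun n ↦ by rw [hq, mul_div_cancel₀ _ (hw0 _)], hr, hρ⟩ hc1
end

section
/- Let w : ℤ → ℂ∖{0} and let p1, p2, q1, q2, r1, r2, r3 : ℤ → ℂ be sequences satisfying, for all n ∈ ℤ: w_{n+1} = −(2·p1_n − q1_n + r1_n)/2, p1_{n+1} = q1_n − p1_n, p2_{n+1} = q2_n − p2_n, q1_{n+1} = −(2·p2_n − q2_n + r2_n)/w_{n+1}, q2_{n+1} = −r3_n / w_{n+1}, r1_{n+1} = −2 w_{n+1}, r2_{n+1} = −w_{n+1}·q1_n, r3_{n+1} = −w_{n+1}·q2_n (the genus-2 Volterra map recursion). Set c₁ := 2(p1₀ + r1₀), c₂ := 2·p2₀ + p1₀² + q1₀·r1₀ + 2·r2₀, c₃ := 2·p1₀·p2₀ + 2·r3₀ + q1₀·r2₀ + q2₀·r1₀, and define ν := c₁/2, b := (c₂ − c₁²/4)/2, a := c₃/4 − c₁c₂/8 + c₁³/32. Then for all n ∈ ℤ the sequence (w_n) satisfies the (P.iv) recurrence with parameters a, b, ν: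 w_{n+4}w_{n+3}w_{n+2} + w_{n+2}w_{n+1}w_n + 2w_{n+2}²(w_{n+3}+w_{n+1}) + w_{n+2}(w_{n+3}² + w_{n+3}w_{n+1} + w_{n+1}²) + w_{n+2}³ + ν·w_{n+2}(w_{n+3}+w_{n+2}+w_{n+1}) + b·w_{n+2} + a = 0. -/
/-!
The relations `P̃ = Q - P`, `-w x Q̃ = 2 P - Q + R`, `R̃ = -w x Q` give
`P̃² + Q̃ R̃ = (Q - P)² + Q (2 P - Q + R) = P² + Q R`, so `F = P² + Q R` is constant along an orbit.
Eliminating `Q` and `R` leaves an equation in `P` and `w` alone,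
`P_n² - w_n x (P_{n-1} + P_n) (P_n + P_{n+1}) = F`.
The parameters are chosen so that `F = (1 + ν x + b x²)² + 4 a x³ + O(x⁴)`. Comparing the
coefficients of `x` and `x²` expresses `p1` and `p2` through `w`, and the coefficient of `x³` is
then the (P.iv) recurrence up to a factor `-4`.
-/

open Polynomial

/-- A bi-infinite orbit of the Volterra map on triplets `(P, Q, R)`, where `u n` stands for `w_n x`.
The relation for `Q` is kept free of division, so it makes sense over any commutative ring. -/
structure IsVolterraOrbit_s8 {A : Type*} [CommRing A] (u P Q R : ℤ → A) : Prop where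
  P_succ : ∀ n, P (n + 1) = Q n - P n
  Q_succ : ∀ n, -u (n + 1) * Q (n + 1) = 2 * P n - Q n + R n
  R_succ : ∀ n, R (n + 1) = -u (n + 1) * Q n

/-- The equation with spectral polynomial `F` that remains for `u` and `P` along a Volterra orbit
after `Q` and `R` have been eliminated from `P² + Q R = F`. -/
def IsEliminatedVolterraOrbit {A : Type*} [CommRing A] (u P : ℤ → A) (F : A) : Prop :=
  ∀ n, P (n + 1) ^ 2 - u (n + 1) * ((P n + P (n + 1)) * (P (n + 1) + P (n + 2))) = F

namespace IsVolterraOrbit_s8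

variable {A : Type*} [CommRing A] {u P Q R : ℤ → A}

theorem sq_add_mul_succ (h : IsVolterraOrbit_s8 u P Q R) (n : ℤ) :
    P (n + 1) ^ 2 + Q (n + 1) * R (n + 1) = P n ^ 2 + Q n * R n :=
  calc P (n + 1) ^ 2 + Q (n + 1) * R (n + 1)
      = (Q n - P n) ^ 2 + Q n * (-u (n + 1) * Q (n + 1)) := by
        rw [h.P_succ, h.R_succ]; ring
    _ = P n ^ 2 + Q n * R n := by rw [h.Q_succ]; ring

theorem sq_add_mul_eq (h : IsVolterraOrbit_s8 u P Q R) (n : ℤ) :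
    P n ^ 2 + Q n * R n = P 0 ^ 2 + Q 0 * R 0 := by
  have periodic : Function.Periodic (fun n ↦ P n ^ 2 + Q n * R n) 1 := h.sq_add_mul_succ
  simpa using periodic.int_mul_eq n

theorem isEliminatedVolterraOrbit (h : IsVolterraOrbit_s8 u P Q R) :
    IsEliminatedVolterraOrbit u P (P 0 ^ 2 + Q 0 * R 0) := by
  intro n
  have Q_eq (m : ℤ) : Q m = P m + P (m + 1) := by rw [h.P_succ]; ring
  rw [← h.sq_add_mul_eq (n + 1), h.R_succ, Q_eq n, Q_eq (n + 1), add_assoc n, one_add_one_eq_two]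
  ring

end IsVolterraOrbit_s8

section Coefficients

variable {K : Type*} [CommRing K]

/-- The quadratic polynomial `k + s x + t x²`, the shape of `P` (with `k = 1`) and of `Q` (with
`k = 2`) in genus 2. -/
noncomputable def quadratic (k s t : K) : K[X] := C k + C s * X + C t * X ^ 2

theorem quadratic_add (k s t k' s' t' : K) :
    quadratic k s t + quadratic k' s' t' = quadratic (k + k') (s + s') (t + t') := by
  simp only [quadratic, C_add]; ring

theorem coeff_zero_quadratic_mul (k s t k' s' t' : K) :
    (quadratic k s t * quadratic k' s' t').coeff 0 = k * k' := by
  simp [quadratic]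

theorem coeff_one_quadratic_mul (k s t k' s' t' : K) :
    (quadratic k s t * quadratic k' s' t').coeff 1 = k * s' + s * k' := by
  simp [quadratic, mul_coeff_one, coeff_X_pow]

theorem coeff_two_quadratic_mul (k s t k' s' t' : K) :
    (quadratic k s t * quadratic k' s' t').coeff 2 = k * t' + s * s' + t * k' := by
  simp [quadratic, coeff_mul, Finset.Nat.antidiagonal_succ, coeff_X, coeff_C, add_assoc]

theorem coeff_three_quadratic_mul (k s t k' s' t' : K) :
    (quadratic k s t * quadratic k' s' t').coeff 3 = s * t' + t * s' := by
  simp [quadratic, coeff_mul, Finset.Nat.antidiagonal_succ, coeff_X, coeff_C]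

end Coefficients

section GenusTwo

variable {K : Type*} [CommRing K]

section SpectralCoefficients

variable (p1 p2 q1 q2 r1 r2 r3 : K)

/-- The invariant `P² + Q R` of the Volterra map at the genus-2 triplet `P = 1 + p1 x + p2 x²`,
`Q = 2 + q1 x + q2 x²`, `R = r1 x + r2 x² + r3 x³`. -/
noncomputable def spectralPolynomial : K[X] :=
  quadratic 1 p1 p2 ^ 2 + quadratic 2 q1 q2 * (X * quadratic r1 r2 r3)

theorem coeff_one_spectralPolynomial :
    (spectralPolynomial p1 p2 q1 q2 r1 r2 r3).coeff 1 = 2 * (p1 + r1) := by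
  simp only [spectralPolynomial, sq, mul_left_comm _ X, coeff_add, coeff_X_mul,
    coeff_zero_quadratic_mul, coeff_one_quadratic_mul]
  ring

theorem coeff_two_spectralPolynomial :
    (spectralPolynomial p1 p2 q1 q2 r1 r2 r3).coeff 2 =
      2 * p2 + p1 ^ 2 + q1 * r1 + 2 * r2 := by
  simp only [spectralPolynomial, sq, mul_left_comm _ X, coeff_add, coeff_X_mul,
    coeff_one_quadratic_mul, coeff_two_quadratic_mul]
  ring

theorem coeff_three_spectralPolynomial :
    (spectralPolynomial p1 p2 q1 q2 r1 r2 r3).coeff 3 =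
      2 * p1 * p2 + 2 * r3 + q1 * r2 + q2 * r1 := by
  simp only [spectralPolynomial, sq, mul_left_comm _ X, coeff_add, coeff_X_mul,
    coeff_two_quadratic_mul, coeff_three_quadratic_mul]
  ring

end SpectralCoefficients

theorem isVolterraOrbit_quadratic {w p1 p2 q1 q2 r1 r2 r3 : ℤ → K}
    (hp1 : ∀ n, p1 (n + 1) = q1 n - p1 n)
    (hp2 : ∀ n, p2 (n + 1) = q2 n - p2 n)
    (hw : ∀ n, -w (n + 1) * 2 = 2 * p1 n - q1 n + r1 n)
    (hq1 : ∀ n, -w (n + 1) * q1 (n + 1) = 2 * p2 n - q2 n + r2 n)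
    (hq2 : ∀ n, -w (n + 1) * q2 (n + 1) = r3 n)
    (hr1 : ∀ n, r1 (n + 1) = -w (n + 1) * 2)
    (hr2 : ∀ n, r2 (n + 1) = -w (n + 1) * q1 n)
    (hr3 : ∀ n, r3 (n + 1) = -w (n + 1) * q2 n) :
    IsVolterraOrbit_s8 (fun n ↦ C (w n) * X) (fun n ↦ quadratic 1 (p1 n) (p2 n))
      (fun n ↦ quadratic 2 (q1 n) (q2 n)) (fun n ↦ X * quadratic (r1 n) (r2 n) (r3 n)) where
  P_succ n := by
    simp only [quadratic, hp1, hp2, C_sub, C_1, C_ofNat]; ring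
  Q_succ n := by
    have hw' := congrArg C (hw n)
    have hq1' := congrArg C (hq1 n)
    have hq2' := congrArg C (hq2 n)
    simp only [C_mul, C_add, C_sub, C_neg, C_ofNat] at hw' hq1' hq2'
    simp only [quadratic, C_1, C_ofNat]
    linear_combination X * hw' + X ^ 2 * hq1' + X ^ 3 * hq2'
  R_succ n := by
    simp only [quadratic, hr1, hr2, hr3, C_mul, C_neg]; ring

variable {w p1 p2 : ℤ → K} {F : K[X]} {ν b a : K}

theorem p1_eq_of_isEliminatedVolterraOrbit (h2 : IsLeftRegular (2 : K))
    (h : IsEliminatedVolterraOrbit (fun n ↦ C (w n) * X) (fun n ↦ quadratic 1 (p1 n) (p2 n)) F)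
    (hF1 : F.coeff 1 = 2 * ν) (n : ℤ) :
    p1 n = ν + 2 * w n := by
  obtain ⟨m, rfl⟩ : ∃ m, n = m + 1 := ⟨n - 1, by simp⟩
  have coeff_one := congrArg (coeff · 1) (h m)
  simp only [hF1, quadratic_add, sq, coeff_sub, mul_assoc, coeff_C_mul,
    coeff_X_mul, coeff_zero_quadratic_mul, coeff_one_quadratic_mul] at coeff_one
  apply h2
  linear_combination coeff_one

theorem p2_eq_of_isEliminatedVolterraOrbit (h2 : IsLeftRegular (2 : K))
    (h : IsEliminatedVolterraOrbit (fun n ↦ C (w n) * X) (fun n ↦ quadratic 1 (p1 n) (p2 n)) F)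
    (hF1 : F.coeff 1 = 2 * ν) (hF2 : F.coeff 2 = ν ^ 2 + 2 * b) (n : ℤ) :
    p2 (n + 1) = b + 2 * w (n + 1) * (ν + w n + w (n + 1) + w (n + 2)) := by
  have p1_eq := p1_eq_of_isEliminatedVolterraOrbit h2 h hF1
  have coeff_two := congrArg (coeff · 2) (h n)
  simp only [hF2, quadratic_add, sq, coeff_sub, mul_assoc, coeff_C_mul,
    coeff_X_mul, coeff_one_quadratic_mul, coeff_two_quadratic_mul, p1_eq] at coeff_two
  apply h2
  linear_combination coeff_two

theorem piv_of_isEliminatedVolterraOrbit (h2 : IsLeftRegular (2 : K))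
    (h : IsEliminatedVolterraOrbit (fun n ↦ C (w n) * X) (fun n ↦ quadratic 1 (p1 n) (p2 n)) F)
    (hF1 : F.coeff 1 = 2 * ν) (hF2 : F.coeff 2 = ν ^ 2 + 2 * b)
    (hF3 : F.coeff 3 = 2 * ν * b + 4 * a) (n : ℤ) :
    w (n + 4) * w (n + 3) * w (n + 2) + w (n + 2) * w (n + 1) * w n
      + 2 * w (n + 2) ^ 2 * (w (n + 3) + w (n + 1))
      + w (n + 2) * (w (n + 3) ^ 2 + w (n + 3) * w (n + 1) + w (n + 1) ^ 2)
      + w (n + 2) ^ 3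
      + ν * w (n + 2) * (w (n + 3) + w (n + 2) + w (n + 1))
      + b * w (n + 2) + a = 0 := by
  have p1_eq := p1_eq_of_isEliminatedVolterraOrbit h2 h hF1
  have p2_eq := p2_eq_of_isEliminatedVolterraOrbit h2 h hF1 hF2
  have p2_two := p2_eq (n + 1)
  have p2_three := p2_eq (n + 2)
  have coeff_three := congrArg (coeff · 3) (h (n + 1))
  simp only [add_assoc n, Int.reduceAdd] at p2_two p2_three coeff_three
  simp only [hF3, quadratic_add, sq, coeff_sub, mul_assoc, coeff_C_mul,
    coeff_X_mul, coeff_two_quadratic_mul, coeff_three_quadratic_mul, p1_eq, p2_eq n, p2_two,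
    p2_three] at coeff_three
  apply h2
  apply h2
  linear_combination -coeff_three

end GenusTwo

theorem stmt8_general {K : Type*} [Field K] [NeZero (2 : K)] (w : ℤ → K)
    (hw0 : ∀ n : ℤ, w n ≠ 0)
    (p1 p2 q1 q2 r1 r2 r3 : ℤ → K)
    (hwrec : ∀ n : ℤ, w (n + 1) = -(2 * p1 n - q1 n + r1 n) / 2)
    (hp1 : ∀ n : ℤ, p1 (n + 1) = q1 n - p1 n)
    (hp2 : ∀ n : ℤ, p2 (n + 1) = q2 n - p2 n)
    (hq1 : ∀ n : ℤ, q1 (n + 1) = -(2 * p2 n - q2 n + r2 n) / w (n + 1))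
    (hq2 : ∀ n : ℤ, q2 (n + 1) = -r3 n / w (n + 1))
    (hr1 : ∀ n : ℤ, r1 (n + 1) = -2 * w (n + 1))
    (hr2 : ∀ n : ℤ, r2 (n + 1) = -(w (n + 1)) * q1 n)
    (hr3 : ∀ n : ℤ, r3 (n + 1) = -(w (n + 1)) * q2 n)
    (c1 c2 c3 a b ν : K)
    (hc1 : c1 = 2 * (p1 0 + r1 0))
    (hc2 : c2 = 2 * p2 0 + p1 0 ^ 2 + q1 0 * r1 0 + 2 * r2 0)
    (hc3 : c3 = 2 * p1 0 * p2 0 + 2 * r3 0 + q1 0 * r2 0 + q2 0 * r1 0)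
    (hν : ν = c1 / 2)
    (hb : b = (c2 - c1 ^ 2 / 4) / 2)
    (ha : a = c3 / 4 - c1 * c2 / 8 + c1 ^ 3 / 32) :
    ∀ n : ℤ,
      w (n + 4) * w (n + 3) * w (n + 2) + w (n + 2) * w (n + 1) * w n
        + 2 * w (n + 2) ^ 2 * (w (n + 3) + w (n + 1))
        + w (n + 2) * (w (n + 3) ^ 2 + w (n + 3) * w (n + 1) + w (n + 1) ^ 2)
        + w (n + 2) ^ 3
        + ν * w (n + 2) * (w (n + 3) + w (n + 2) + w (n + 1))
        + b * w (n + 2) + a = 0 := by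
  have h2 : (2 : K) ≠ 0 := two_ne_zero
  have h4 : (4 : K) = 2 ^ 2 := by norm_num
  have h8 : (8 : K) = 2 ^ 3 := by norm_num
  have h32 : (32 : K) = 2 ^ 5 := by norm_num
  have orbit := isVolterraOrbit_quadratic (w := w) (r1 := r1) hp1 hp2
    (hw := fun n ↦ by rw [hwrec]; field)
    (hq1 := fun n ↦ by rw [hq1]; field [hw0 (n + 1)])
    (hq2 := fun n ↦ by rw [hq2]; field [hw0 (n + 1)])
    (hr1 := fun n ↦ by rw [hr1]; ring) hr2 hr3
  have eliminated : IsEliminatedVolterraOrbit _ _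
      (spectralPolynomial (p1 0) (p2 0) (q1 0) (q2 0) (r1 0) (r2 0) (r3 0)) :=
    orbit.isEliminatedVolterraOrbit
  apply piv_of_isEliminatedVolterraOrbit (IsRegular.of_ne_zero h2).left eliminated
  · rw [coeff_one_spectralPolynomial, hν, hc1]; field
  · rw [coeff_two_spectralPolynomial, ← hc2, hb, hν, h4]; field
  · rw [coeff_three_spectralPolynomial, ← hc3, ha, hb, hν, h4, h8, h32]; field

theorem stmt8 (w : ℤ → ℂ) (hw0 : ∀ n : ℤ, w n ≠ 0)
    (p1 p2 q1 q2 r1 r2 r3 : ℤ → ℂ)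
    (hwrec : ∀ n : ℤ, w (n + 1) = -(2 * p1 n - q1 n + r1 n) / 2)
    (hp1 : ∀ n : ℤ, p1 (n + 1) = q1 n - p1 n)
    (hp2 : ∀ n : ℤ, p2 (n + 1) = q2 n - p2 n)
    (hq1 : ∀ n : ℤ, q1 (n + 1) = -(2 * p2 n - q2 n + r2 n) / w (n + 1))
    (hq2 : ∀ n : ℤ, q2 (n + 1) = -r3 n / w (n + 1))
    (hr1 : ∀ n : ℤ, r1 (n + 1) = -2 * w (n + 1))
    (hr2 : ∀ n : ℤ, r2 (n + 1) = -(w (n + 1)) * q1 n)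
    (hr3 : ∀ n : ℤ, r3 (n + 1) = -(w (n + 1)) * q2 n)
    (c1 c2 c3 a b ν : ℂ)
    (hc1 : c1 = 2 * (p1 0 + r1 0))
    (hc2 : c2 = 2 * p2 0 + p1 0 ^ 2 + q1 0 * r1 0 + 2 * r2 0)
    (hc3 : c3 = 2 * p1 0 * p2 0 + 2 * r3 0 + q1 0 * r2 0 + q2 0 * r1 0)
    (hν : ν = c1 / 2)
    (hb : b = (c2 - c1 ^ 2 / 4) / 2)
    (ha : a = c3 / 4 - c1 * c2 / 8 + c1 ^ 3 / 32) :
    ∀ n : ℤ,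
      w (n + 4) * w (n + 3) * w (n + 2) + w (n + 2) * w (n + 1) * w n
        + 2 * w (n + 2) ^ 2 * (w (n + 3) + w (n + 1))
        + w (n + 2) * (w (n + 3) ^ 2 + w (n + 3) * w (n + 1) + w (n + 1) ^ 2)
        + w (n + 2) ^ 3
        + ν * w (n + 2) * (w (n + 3) + w (n + 2) + w (n + 1))
        + b * w (n + 2) + a = 0 :=
  stmt8_general w hw0 p1 p2 q1 q2 r1 r2 r3 hwrec hp1 hp2 hq1 hq2 hr1 hr2 hr3 c1 c2 c3 a b ν
    hc1 hc2 hc3 hν hb ha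
end

section
/- Let a, b, ν ∈ ℂ and let w₀, w₁, w₂, w₃, w₄ ∈ ℂ with w₁, w₂, w₃ nonzero, satisfying the (P.iv) relation w₄w₃w₂ + w₂w₁w₀ + 2w₂²(w₃+w₁) + w₂(w₃² + w₃w₁ + w₁²) + w₂³ + ν·w₂(w₃+w₂+w₁) + b·w₂ + a = 0. Then K₁(w₁,w₂,w₃,w₄) = K₁(w₀,w₁,w₂,w₃) and K₂(w₁,w₂,w₃,w₄) = K₂(w₀,w₁,w₂,w₃); that is, K₁ and K₂ are invariants of the map (w₀,w₁,w₂,w₃) ↦ (w₁,w₂,w₃,w₄) defined by the (P.iv) recurrence. -/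
/-- The left-hand side of the (P.iv) relation on five consecutive terms: a sequence `w` solves
(P.iv) iff this vanishes at `w n, …, w (n + 4)` for every `n`. It is kept as a polynomial
rather than solved for `w4`, which would require dividing by `w2 * w3`. -/
noncomputable def pivPoly (a b ν w0 w1 w2 w3 w4 : ℂ) : ℂ :=
  w4 * w3 * w2 + w2 * w1 * w0 + 2 * w2 ^ 2 * (w3 + w1) + w2 * (w3 ^ 2 + w3 * w1 + w1 ^ 2)
    + w2 ^ 3 + ν * w2 * (w3 + w2 + w1) + b * w2 + a

section FirstIntegrals

/-! The multipliers of `pivPoly` below are the logarithmic derivatives of `w2` along the first two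
flows of the Volterra lattice. -/

variable (a b ν w0 w1 w2 w3 w4 : ℂ)

theorem K1_shift_sub_K1 :
    K1 a b ν w1 w2 w3 w4 - K1 a b ν w0 w1 w2 w3 =
      (w3 - w1) * pivPoly a b ν w0 w1 w2 w3 w4 := by
  unfold K1 pivPoly
  ring

theorem K2_shift_sub_K2 :
    K2 a b ν w1 w2 w3 w4 - K2 a b ν w0 w1 w2 w3 =
      (w3 * (w4 + w3 + w2) - w1 * (w2 + w1 + w0)) * pivPoly a b ν w0 w1 w2 w3 w4 := by
  unfold K2 pivPoly
  ring

end FirstIntegrals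

theorem stmt11 (a b ν : ℂ) (w0 w1 w2 w3 w4 : ℂ)
    (h1 : w1 ≠ 0) (h2 : w2 ≠ 0) (h3 : w3 ≠ 0)
    (hpiv : w4 * w3 * w2 + w2 * w1 * w0
      + 2 * w2 ^ 2 * (w3 + w1)
      + w2 * (w3 ^ 2 + w3 * w1 + w1 ^ 2)
      + w2 ^ 3 + ν * w2 * (w3 + w2 + w1) + b * w2 + a = 0) :
    K1 a b ν w1 w2 w3 w4 = K1 a b ν w0 w1 w2 w3 ∧
    K2 a b ν w1 w2 w3 w4 = K2 a b ν w0 w1 w2 w3 := by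
  have pivPoly_eq_zero : pivPoly a b ν w0 w1 w2 w3 w4 = 0 := hpiv
  constructor
  · rw [← sub_eq_zero, K1_shift_sub_K1, pivPoly_eq_zero, mul_zero]
  · rw [← sub_eq_zero, K2_shift_sub_K2, pivPoly_eq_zero, mul_zero]
end

section
/- Let a, b, ν ∈ ℂ. For every (w₀,w₁,w₂,w₃) ∈ ℂ⁴ with w₁ ≠ 0 and w₂ ≠ 0, one has Σ_{0 ≤ i, j ≤ 3} (∂K₁/∂w_i)(w) · Π_{ij}(w) · (∂K₂/∂w_j)(w) = 0, where the partial derivatives are those of the polynomials K₁, K₂ and Π(w) is the antisymmetric 4×4 structure matrix of the (P.iv) Poisson bracket; that is, K₁ and K₂ are in involution with respect to this bracket. -/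
open MvPolynomial

/-- The first integral `K₁` of the (P.iv) map, as a polynomial in (w₀,w₁,w₂,w₃). -/
noncomputable def K1poly (a b ν : ℂ) : MvPolynomial (Fin 4) ℂ :=
  X 1 * X 2 * (X 2 * X 3 + X 0 * X 1 - X 0 * X 3 + (X 1 + X 2) ^ 2
      + C ν * (X 1 + X 2) + C b)
    + C a * (X 1 + X 2)

/-- The second first integral `K₂` of the (P.iv) map, as a polynomial in (w₀,w₁,w₂,w₃). -/
noncomputable def K2poly (a b ν : ℂ) : MvPolynomial (Fin 4) ℂ :=
  X 1 * X 2 * (X 0 ^ 2 * X 1 + X 3 ^ 2 * X 2 + X 0 * X 3 * (X 1 + X 2)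
      + X 0 * (X 2 ^ 2 + 2 * X 1 ^ 2) + X 3 * (X 1 ^ 2 + 2 * X 2 ^ 2)
      + 3 * (X 0 + X 3) * X 1 * X 2 + (X 1 + X 2) ^ 3
      + C ν * (X 0 * X 3 + (X 0 + X 3) * (X 1 + X 2) + (X 1 + X 2) ^ 2)
      + C b * (X 0 + X 1 + X 2 + X 3))
    + C a * (X 0 * X 1 + X 3 * X 2 + (X 1 + X 2) ^ 2)

/-- The antisymmetric structure matrix `Π(w)` of the (P.iv) Poisson bracket. -/
noncomputable def PivPi (ν : ℂ) (w : Fin 4 → ℂ) : Matrix (Fin 4) (Fin 4) ℂ :=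
  !![0, 0, 1 / w 1, -((w 0 + 2 * w 1 + 2 * w 2 + w 3 + ν) / (w 1 * w 2));
     0, 0, 0, 1 / w 2;
     -(1 / w 1), 0, 0, 0;
     (w 0 + 2 * w 1 + 2 * w 2 + w 3 + ν) / (w 1 * w 2), -(1 / w 2), 0, 0]

/-!
The polynomial `K₂ + ν K₁ + a b` factors as `A * B`, where `A = w₁w₂(w₀ + w₁ + w₂ + w₃ + ν) + a` and
`B = w₀w₁ + w₂w₃ + (w₁ + w₂)² + ν(w₁ + w₂) + b`. Both factors are Darboux polynomials of the
Hamiltonian vector field of `K₁`, with opposite cofactors: `{K₁, A} = (w₁ - w₂) A` and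
`{K₁, B} = -(w₁ - w₂) B`. Hence `{K₁, A B} = 0` by the Leibniz rule, and `{K₁, K₁} = 0` by
antisymmetry.
-/

section PoissonBracket

variable {σ R : Type*}

/-- The gradient of the polynomial `f` at the point `w`. -/
noncomputable def gradAt [CommSemiring R] (w : σ → R) (f : MvPolynomial σ R) : σ → R :=
  fun i ↦ eval w (pderiv i f)

/-- The value at the point `w` of the bracket `{f, g}` whose structure matrix takes the value `P`
at `w`. Working at a point allows structure matrices with non-polynomial entries. -/
noncomputable def bracketAt [CommSemiring R] [Fintype σ] [DecidableEq σ] (P : Matrix σ σ R)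
    (w : σ → R) (f g : MvPolynomial σ R) : R :=
  Matrix.toBilin' P (gradAt w f) (gradAt w g)

section CommSemiring

variable [CommSemiring R]

theorem gradAt_C (w : σ → R) (r : R) : gradAt w (C r) = 0 := by
  ext i
  simp [gradAt]

theorem gradAt_mul (w : σ → R) (f g : MvPolynomial σ R) :
    gradAt w (f * g) = eval w g • gradAt w f + eval w f • gradAt w g := by
  ext i
  simp [gradAt, add_comm]

variable [Fintype σ] [DecidableEq σ] (P : Matrix σ σ R) (w : σ → R)

theorem bracketAt_eq_sum (f g : MvPolynomial σ R) :
    bracketAt P w f g = ∑ i, ∑ j, eval w (pderiv i f) * P i j * eval w (pderiv j g) :=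
  Matrix.toBilin'_apply P _ _

theorem bracketAt_C_right (f : MvPolynomial σ R) (r : R) : bracketAt P w f (C r) = 0 := by
  simp [bracketAt, gradAt_C]

theorem bracketAt_mul_right (f g h : MvPolynomial σ R) :
    bracketAt P w f (g * h) = eval w h * bracketAt P w f g + eval w g * bracketAt P w f h := by
  simp [bracketAt, gradAt_mul]

end CommSemiring

variable [CommRing R]

theorem gradAt_sub (w : σ → R) (f g : MvPolynomial σ R) :
    gradAt w (f - g) = gradAt w f - gradAt w g := by
  ext i
  simp [gradAt]

variable [Fintype σ] [DecidableEq σ] (P : Matrix σ σ R) (w : σ → R)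

theorem bracketAt_sub_right (f g h : MvPolynomial σ R) :
    bracketAt P w f (g - h) = bracketAt P w f g - bracketAt P w f h := by
  simp [bracketAt, gradAt_sub]

variable {P} in
theorem bracketAt_self [IsAddTorsionFree R] (hP : P.transpose = -P) (f : MvPolynomial σ R) :
    bracketAt P w f f = 0 := by
  refine self_eq_neg.mp ?_
  calc bracketAt P w f f
      = gradAt w f ⬝ᵥ P.mulVec (gradAt w f) := Matrix.toBilin'_apply' P _ _
    _ = gradAt w f ⬝ᵥ P.transpose.mulVec (gradAt w f) := by
        rw [Matrix.mulVec_transpose, Matrix.dotProduct_mulVec, dotProduct_comm]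
    _ = -bracketAt P w f f := by
        rw [hP, Matrix.neg_mulVec, dotProduct_neg, bracketAt, Matrix.toBilin'_apply']

variable {P w} in
theorem bracketAt_mul_right_eq_zero_of_opposite_cofactors {f g h : MvPolynomial σ R} {c : R}
    (hg : bracketAt P w f g = c * eval w g) (hh : bracketAt P w f h = -c * eval w h) :
    bracketAt P w f (g * h) = 0 := by
  rw [bracketAt_mul_right, hg, hh]
  ring

end PoissonBracket

section Piv

variable (a b ν : ℂ) (w : Fin 4 → ℂ)

/-- The factor `A` of `K₂ + ν K₁ + a b`, a Darboux polynomial of the flow of `K₁`. -/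
noncomputable def pivFactorA : MvPolynomial (Fin 4) ℂ :=
  X 1 * X 2 * (X 0 + X 1 + X 2 + X 3 + C ν) + C a

/-- The factor `B` of `K₂ + ν K₁ + a b`, a Darboux polynomial of the flow of `K₁`. -/
noncomputable def pivFactorB : MvPolynomial (Fin 4) ℂ :=
  X 0 * X 1 + X 2 * X 3 + (X 1 + X 2) ^ 2 + C ν * (X 1 + X 2) + C b

theorem K2poly_eq_factors_mul_sub :
    K2poly a b ν = pivFactorA a ν * pivFactorB b ν - C ν * K1poly a b ν - C (a * b) := by
  simp only [K2poly, K1poly, pivFactorA, pivFactorB, C_mul]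
  ring

theorem gradAt_K1poly :
    gradAt w (K1poly a b ν) =
      ![w 1 * w 2 * (w 1 - w 3),
        w 2 * (eval w (pivFactorB b ν) - w 0 * w 3)
          + w 1 * w 2 * (w 0 + 2 * (w 1 + w 2) + ν) + a,
        w 1 * (eval w (pivFactorB b ν) - w 0 * w 3)
          + w 1 * w 2 * (w 3 + 2 * (w 1 + w 2) + ν) + a,
        w 1 * w 2 * (w 2 - w 0)] := by
  ext i
  fin_cases i <;> simp [gradAt, K1poly, pivFactorB, pderiv_X] <;> ring

theorem gradAt_pivFactorA :
    gradAt w (pivFactorA a ν) =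
      ![w 1 * w 2,
        w 2 * (w 0 + 2 * w 1 + w 2 + w 3 + ν),
        w 1 * (w 0 + w 1 + 2 * w 2 + w 3 + ν),
        w 1 * w 2] := by
  ext i
  fin_cases i <;> simp [gradAt, pivFactorA, pderiv_X] <;> ring

theorem gradAt_pivFactorB :
    gradAt w (pivFactorB b ν) =
      ![w 1, w 0 + 2 * (w 1 + w 2) + ν, w 3 + 2 * (w 1 + w 2) + ν, w 2] := by
  ext i
  fin_cases i <;> simp [gradAt, pivFactorB, pderiv_X] <;> ring

theorem PivPi_transpose : (PivPi ν w).transpose = -PivPi ν w := by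
  ext i j
  fin_cases i <;> fin_cases j <;> simp [PivPi]

theorem toBilin'_PivPi_apply (x y : Fin 4 → ℂ) :
    Matrix.toBilin' (PivPi ν w) x y =
      (x 0 * y 2 - x 2 * y 0) / w 1 + (x 1 * y 3 - x 3 * y 1) / w 2
        - (w 0 + 2 * w 1 + 2 * w 2 + w 3 + ν) / (w 1 * w 2) * (x 0 * y 3 - x 3 * y 0) := by
  simp only [Matrix.toBilin'_apply, Fin.sum_univ_four, PivPi, Matrix.of_apply, Matrix.cons_val]
  ring

variable {w}

theorem bracketAt_K1poly_pivFactorA (h1 : w 1 ≠ 0) (h2 : w 2 ≠ 0) :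
    bracketAt (PivPi ν w) w (K1poly a b ν) (pivFactorA a ν) =
      (w 1 - w 2) * eval w (pivFactorA a ν) := by
  rw [bracketAt, gradAt_K1poly, gradAt_pivFactorA, toBilin'_PivPi_apply]
  simp only [pivFactorA, pivFactorB, map_add, map_mul, map_pow, eval_X, eval_C, Matrix.cons_val]
  field_simp
  ring

theorem bracketAt_K1poly_pivFactorB (h1 : w 1 ≠ 0) (h2 : w 2 ≠ 0) :
    bracketAt (PivPi ν w) w (K1poly a b ν) (pivFactorB b ν) =
      -(w 1 - w 2) * eval w (pivFactorB b ν) := by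
  rw [bracketAt, gradAt_K1poly, gradAt_pivFactorB, toBilin'_PivPi_apply]
  simp only [pivFactorB, map_add, map_mul, map_pow, eval_X, eval_C, Matrix.cons_val]
  field_simp
  ring

end Piv

theorem stmt12 (a b ν : ℂ) (w : Fin 4 → ℂ) (h1 : w 1 ≠ 0) (h2 : w 2 ≠ 0) :
    ∑ i : Fin 4, ∑ j : Fin 4,
      MvPolynomial.eval w (MvPolynomial.pderiv i (K1poly a b ν))
        * PivPi ν w i j
        * MvPolynomial.eval w (MvPolynomial.pderiv j (K2poly a b ν)) = 0 := by
  have factors_mul : bracketAt (PivPi ν w) w (K1poly a b ν) (pivFactorA a ν * pivFactorB b ν) = 0 :=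
    bracketAt_mul_right_eq_zero_of_opposite_cofactors
      (bracketAt_K1poly_pivFactorA a b ν h1 h2) (bracketAt_K1poly_pivFactorB a b ν h1 h2)
  have self : bracketAt (PivPi ν w) w (K1poly a b ν) (K1poly a b ν) = 0 :=
    bracketAt_self w (PivPi_transpose ν w) _
  rw [← bracketAt_eq_sum, K2poly_eq_factors_mul_sub, bracketAt_sub_right, bracketAt_sub_right,
    bracketAt_mul_right _ _ _ (C ν), bracketAt_C_right, bracketAt_C_right, factors_mul, self]
  ring
end

section
/- Let a, b, ν ∈ ℂ. For every (w₀,w₁,w₂,w₃) ∈ ℂ⁴ with w₁ ≠ 0 and w₂ ≠ 0, the Hamiltonian vector field of K₁ with respect to the (P.iv) Poisson bracket has Volterra form in its middle components: Σ_{0 ≤ j ≤ 3} Π_{1j}(w) · (∂K₁/∂w_j)(w) = w₁(w₂ − w₀) and Σ_{0 ≤ j ≤ 3} Π_{2j}(w) · (∂K₁/∂w_j)(w) = w₂(w₃ − w₁), where the partial derivatives are those of the polynomial K₁. -/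
open MvPolynomial

theorem sum_PivPi_one_mul (ν : ℂ) (w v : Fin 4 → ℂ) :
    ∑ j, PivPi ν w 1 j * v j = v 3 / w 2 := by
  simp [PivPi, Fin.sum_univ_four, div_eq_inv_mul]

theorem sum_PivPi_two_mul (ν : ℂ) (w v : Fin 4 → ℂ) :
    ∑ j, PivPi ν w 2 j * v j = -(v 0 / w 1) := by
  simp [PivPi, Fin.sum_univ_four, div_eq_inv_mul]

theorem pderiv_zero_K1poly (a b ν : ℂ) :
    pderiv 0 (K1poly a b ν) = X 1 * X 2 * (X 1 - X 3) := by
  simp [K1poly, pderiv_X, Derivation.leibniz_pow]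

theorem pderiv_three_K1poly (a b ν : ℂ) :
    pderiv 3 (K1poly a b ν) = X 1 * X 2 * (X 2 - X 0) := by
  simp [K1poly, pderiv_X, Derivation.leibniz_pow]

theorem stmt14 (a b ν : ℂ) (w : Fin 4 → ℂ) (h1 : w 1 ≠ 0) (h2 : w 2 ≠ 0) :
    (∑ j : Fin 4, PivPi ν w 1 j *
        MvPolynomial.eval w (MvPolynomial.pderiv j (K1poly a b ν)))
      = w 1 * (w 2 - w 0) ∧
    (∑ j : Fin 4, PivPi ν w 2 j *
        MvPolynomial.eval w (MvPolynomial.pderiv j (K1poly a b ν)))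
      = w 2 * (w 3 - w 1) := by
  constructor
  · rw [sum_PivPi_one_mul, pderiv_three_K1poly]
    simp only [map_mul, map_sub, eval_X]
    field_simp
  · rw [sum_PivPi_two_mul, pderiv_zero_K1poly]
    simp only [map_mul, map_sub, eval_X]
    field_simp
    ring
end

section
/- Let c₁ ∈ ℂ and let p_n, q_n, r_n, ρ_n : ℝ → ℂ (n ∈ ℤ) be differentiable functions, and set w_n := −r_n/2. Suppose that for all n ∈ ℤ and all t ∈ ℝ: (a) 2(p_n(t) + r_n(t)) = c₁; (b) p_{n+1}(t) = q_n(t) − p_n(t); (c) ρ_n(t) = −w_n(t)·q_{n−1}(t); (d) p_n'(t) = ρ_n(t) − (1/2)·r_n(t)·q_n(t). Then the sequence (w_n) is a solution of the infinite Volterra lattice: w_n'(t) = w_n(t)·(w_{n+1}(t) − w_{n−1}(t)) for all n ∈ ℤ and t ∈ ℝ. -/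
/-!
Everything is expressed through `w` and `p`. Since `r n = -2 * w n`, the flow is
`p n' = w n * (q n - q (n - 1))`, and the orbit relation turns the difference of the `q`s into
`p (n + 1) - p (n - 1)`. Constancy of `2 * (p n + r n)` makes `w n` equal to `p n / 2` up to a
constant that depends neither on `n` nor on time, so halving the flow of `p` gives the lattice.
-/

section Algebra

variable {ι K : Type*} [AddGroupWithOne ι] [Field K]

theorem sub_pred_eq_succ_sub_pred {A : Type*} [AddCommGroup A] {p q : ι → A}
    (hpq : ∀ n, p (n + 1) = q n - p n) (n : ι) :
    q n - q (n - 1) = p (n + 1) - p (n - 1) := by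
  have hp : p n = q (n - 1) - p (n - 1) := by simpa only [sub_add_cancel] using hpq (n - 1)
  rw [hpq n, hp]
  abel

theorem neg_mul_sub_half_mul_eq {w r : K} (hw : w = -r / 2) (a b : K) :
    -w * a - 1 / 2 * r * b = w * (b - a) := by
  rw [hw]
  ring

theorem neg_half_eq_half_sub [NeZero (2 : K)] {p r c : K} (hc : 2 * (p + r) = c) :
    -r / 2 = (p - c / 2) / 2 := by
  rw [← hc, mul_div_cancel_left₀ _ two_ne_zero, sub_add_cancel_left]

end Algebra

/- Taking `ι = ZMod N` gives the `N`-periodic Volterra lattice. -/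
theorem stmt15_general {ι 𝕜 K : Type*} [AddGroupWithOne ι] [NontriviallyNormedField 𝕜]
    [NormedField K] [NormedAlgebra 𝕜 K] [NeZero (2 : K)] {c : K} {p q r ρ w : ι → 𝕜 → K}
    (hw : ∀ n t, w n t = -(r n t) / 2)
    (hinv : ∀ n t, 2 * (p n t + r n t) = c)
    (horbit : ∀ n t, p (n + 1) t = q n t - p n t)
    (hρ : ∀ n t, ρ n t = -(w n t) * q (n - 1) t)
    (hflow : ∀ n t, HasDerivAt (p n) (ρ n t - 1 / 2 * r n t * q n t) t) (n : ι) (t : 𝕜) :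
    HasDerivAt (w n) (w n t * (w (n + 1) t - w (n - 1) t)) t := by
  have hwp (m : ι) (s : 𝕜) : w m s = (p m s - c / 2) / 2 :=
    (hw m s).trans (neg_half_eq_half_sub (hinv m s))
  have hp : ρ n t - 1 / 2 * r n t * q n t = w n t * (p (n + 1) t - p (n - 1) t) := by
    rw [hρ, neg_mul_sub_half_mul_eq (hw n t),
      sub_pred_eq_succ_sub_pred (p := (p · t)) (q := (q · t)) (horbit · t)]
  have hdiff : w (n + 1) t - w (n - 1) t = (p (n + 1) t - p (n - 1) t) / 2 := by
    rw [hwp, hwp]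
    ring
  have hderiv : HasDerivAt (w n) ((ρ n t - 1 / 2 * r n t * q n t) / 2) t := by
    rw [funext (hwp n)]
    exact ((hflow n t).sub_const (c / 2)).div_const 2
  rwa [hp, mul_div_assoc, ← hdiff] at hderiv

theorem stmt15 (c1 : ℂ) (p q r ρ : ℤ → ℝ → ℂ)
    (hdp : ∀ n : ℤ, Differentiable ℝ (p n))
    (hdq : ∀ n : ℤ, Differentiable ℝ (q n))
    (hdr : ∀ n : ℤ, Differentiable ℝ (r n))
    (hdρ : ∀ n : ℤ, Differentiable ℝ (ρ n))
    (w : ℤ → ℝ → ℂ) (hwdef : ∀ n : ℤ, ∀ t : ℝ, w n t = -(r n t) / 2)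
    -- (a)  H₁ = 2(p_n + r_n) is constant, equal to c₁
    (ha : ∀ n : ℤ, ∀ t : ℝ, 2 * (p n t + r n t) = c1)
    -- (b)  p_{n+1} = q_n − p_n
    (hb : ∀ n : ℤ, ∀ t : ℝ, p (n + 1) t = q n t - p n t)
    -- (c)  ρ_n = −w_n·q_{n−1}
    (hc : ∀ n : ℤ, ∀ t : ℝ, ρ n t = -(w n t) * q (n - 1) t)
    -- (d)  ṗ_n = ρ_n − (1/2)·r_n·q_n
    (hd : ∀ n : ℤ, ∀ t : ℝ, deriv (p n) t = ρ n t - (1 / 2) * r n t * q n t) :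
    -- then (w_n) solves the infinite Volterra lattice
    ∀ n : ℤ, ∀ t : ℝ, deriv (w n) t = w n t * (w (n + 1) t - w (n - 1) t) := by
  exact fun n t => (stmt15_general hwdef ha hb hc
    (fun m s => hd m s ▸ (hdp m s).hasDerivAt) n t).deriv
end

section
/- Let w_n : ℝ → ℂ (n ∈ ℤ) be differentiable functions satisfying the infinite Volterra lattice w_n'(t) = w_n(t)(w_{n+1}(t) − w_{n−1}(t)) for all n ∈ ℤ and t ∈ ℝ. Define a_{j+1} := w_{2j−1}·w_{2j} and b_{j+1} := −w_{2j} − w_{2j+1} for j ∈ ℤ. Then (a_n, b_n) is a solution of the infinite Toda lattice: a_n'(t) = a_n(t)(b_{n−1}(t) − b_n(t)) and b_n'(t) = a_n(t) − a_{n+1}(t) for all n ∈ ℤ, t ∈ ℝ. Likewise, a*_{j+1} := w_{2j}·w_{2j+1} and b*_{j+1} := −w_{2j+1} − w_{2j+2} define another solution of the infinite Toda lattice. -/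
/-!
For a Volterra solution `w`, put `α m = w (m - 1) * w m` and `β m = -w m - w (m + 1)`. The Leibniz
rule gives `α' m = α m * (β (m - 2) - β m)` and `β' m = α m - α (m + 2)`, so restricting to even `m`
yields the first Toda solution. The Volterra lattice is invariant under shifts of the index, and
shifting `w` by one turns the first Toda solution into the second.
-/

section

variable {𝕜 R : Type*} [NontriviallyNormedField 𝕜] [NormedCommRing R] [NormedAlgebra 𝕜 R]

/-- `w` is a differentiable solution of the infinite Volterra lattice
`ẇ_n = w_n (w_{n+1} - w_{n-1})`, with time in `𝕜` and values in a commutative normed algebra.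
Using `HasDerivAt` makes differentiability part of the notion. -/
def IsVolterraSolution (w : ℤ → 𝕜 → R) : Prop :=
  ∀ n t, HasDerivAt (w n) (w n t * (w (n + 1) t - w (n - 1) t)) t

/-- `(a, b)` is a differentiable solution of the infinite Toda lattice in Flaschka-type variables,
`ȧ_n = a_n (b_{n-1} - b_n)` and `ḃ_n = a_n - a_{n+1}`. -/
structure IsTodaSolution (a b : ℤ → 𝕜 → R) : Prop where
  hasDerivAt_fst : ∀ n t, HasDerivAt (a n) (a n t * (b (n - 1) t - b n t)) t
  hasDerivAt_snd : ∀ n t, HasDerivAt (b n) (a n t - a (n + 1) t) t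

namespace IsVolterraSolution

variable {w a b : ℤ → 𝕜 → R}

theorem of_deriv (hdiff : ∀ n, Differentiable 𝕜 (w n))
    (hderiv : ∀ n t, deriv (w n) t = w n t * (w (n + 1) t - w (n - 1) t)) :
    IsVolterraSolution w :=
  fun n t => hderiv n t ▸ (hdiff n t).hasDerivAt

theorem shift (hw : IsVolterraSolution w) (k : ℤ) : IsVolterraSolution fun n => w (n + k) := by
  intro n t
  simpa only [add_right_comm, sub_add_eq_add_sub] using hw (n + k) t

theorem hasDerivAt_pred_mul (hw : IsVolterraSolution w) (m : ℤ) (t : 𝕜) :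
    HasDerivAt (fun s => w (m - 1) s * w m s)
      (w (m - 1) t * w m t * ((-w (m - 2) t - w (m - 1) t) - (-w m t - w (m + 1) t))) t := by
  have hpred : HasDerivAt (w (m - 1)) (w (m - 1) t * (w m t - w (m - 2) t)) t := by
    convert hw (m - 1) t using 4 <;> ring_nf
  exact (hpred.mul (hw m t)).congr_deriv (by ring)

theorem hasDerivAt_neg_sub_succ (hw : IsVolterraSolution w) (m : ℤ) (t : 𝕜) :
    HasDerivAt (fun s => -w m s - w (m + 1) s)
      (w (m - 1) t * w m t - w (m + 1) t * w (m + 2) t) t := by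
  have hsucc : HasDerivAt (w (m + 1)) (w (m + 1) t * (w (m + 2) t - w m t)) t := by
    convert hw (m + 1) t using 4 <;> ring_nf
  exact ((hw m t).neg.sub hsucc).congr_deriv (by ring)

theorem isTodaSolution (hw : IsVolterraSolution w)
    (ha : ∀ j t, a (j + 1) t = w (2 * j - 1) t * w (2 * j) t)
    (hb : ∀ j t, b (j + 1) t = -w (2 * j) t - w (2 * j + 1) t) :
    IsTodaSolution a b where
  hasDerivAt_fst n t := by
    obtain ⟨j, rfl⟩ : ∃ j, n = j + 1 := ⟨n - 1, by ring⟩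
    have hb_pred : b j t = -w (2 * j - 2) t - w (2 * j - 1) t := by
      convert hb (j - 1) t using 3 <;> ring_nf
    rw [funext (ha j), add_sub_cancel_right, hb_pred, hb j t]
    exact hw.hasDerivAt_pred_mul (2 * j) t
  hasDerivAt_snd n t := by
    obtain ⟨j, rfl⟩ : ∃ j, n = j + 1 := ⟨n - 1, by ring⟩
    have ha_succ : a (j + 1 + 1) t = w (2 * j + 1) t * w (2 * j + 2) t := by
      convert ha (j + 1) t using 3 <;> ring
    rw [funext (hb j), ha_succ, ha j t]
    exact hw.hasDerivAt_neg_sub_succ (2 * j) t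

end IsVolterraSolution

theorem stmt16_general {w A B As Bs : ℤ → 𝕜 → R} (hw : IsVolterraSolution w)
    (hA : ∀ j t, A (j + 1) t = w (2 * j - 1) t * w (2 * j) t)
    (hB : ∀ j t, B (j + 1) t = -w (2 * j) t - w (2 * j + 1) t)
    (hAs : ∀ j t, As (j + 1) t = w (2 * j) t * w (2 * j + 1) t)
    (hBs : ∀ j t, Bs (j + 1) t = -w (2 * j + 1) t - w (2 * j + 2) t) :
    IsTodaSolution A B ∧ IsTodaSolution As Bs := by
  refine ⟨hw.isTodaSolution hA hB, (hw.shift 1).isTodaSolution ?_ ?_⟩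
  · simpa only [sub_add_cancel] using hAs
  · simpa only [add_assoc, one_add_one_eq_two] using hBs

end

theorem stmt16 (w : ℤ → ℝ → ℂ)
    (hdiff : ∀ n : ℤ, Differentiable ℝ (w n))
    -- the infinite Volterra lattice
    (hV : ∀ n : ℤ, ∀ t : ℝ, deriv (w n) t = w n t * (w (n + 1) t - w (n - 1) t))
    (A B As Bs : ℤ → ℝ → ℂ)
    -- a_{j+1} := w_{2j−1}·w_{2j},  b_{j+1} := −w_{2j} − w_{2j+1}
    (hA : ∀ j : ℤ, ∀ t : ℝ, A (j + 1) t = w (2 * j - 1) t * w (2 * j) t)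
    (hB : ∀ j : ℤ, ∀ t : ℝ, B (j + 1) t = -(w (2 * j) t) - w (2 * j + 1) t)
    -- a*_{j+1} := w_{2j}·w_{2j+1},  b*_{j+1} := −w_{2j+1} − w_{2j+2}
    (hAs : ∀ j : ℤ, ∀ t : ℝ, As (j + 1) t = w (2 * j) t * w (2 * j + 1) t)
    (hBs : ∀ j : ℤ, ∀ t : ℝ, Bs (j + 1) t = -(w (2 * j + 1) t) - w (2 * j + 2) t) :
    -- (a_n, b_n) solves the infinite Toda lattice
    (∀ n : ℤ, ∀ t : ℝ, deriv (A n) t = A n t * (B (n - 1) t - B n t)) ∧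
    (∀ n : ℤ, ∀ t : ℝ, deriv (B n) t = A n t - A (n + 1) t) ∧
    -- and so does (a*_n, b*_n)
    (∀ n : ℤ, ∀ t : ℝ, deriv (As n) t = As n t * (Bs (n - 1) t - Bs n t)) ∧
    (∀ n : ℤ, ∀ t : ℝ, deriv (Bs n) t = As n t - As (n + 1) t) := by
  obtain ⟨hAB, hABs⟩ := stmt16_general (.of_deriv hdiff hV) hA hB hAs hBs
  exact ⟨fun n t => (hAB.hasDerivAt_fst n t).deriv, fun n t => (hAB.hasDerivAt_snd n t).deriv,
    fun n t => (hABs.hasDerivAt_fst n t).deriv, fun n t => (hABs.hasDerivAt_snd n t).deriv⟩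
end

section
/- Let a, b, ν ∈ ℂ and let w : ℤ → ℂ with w_n ≠ 0 for all n, satisfying the (P.iv) recurrence for all n ∈ ℤ. Then for all n ∈ ℤ the fifth-order relation w_{n+4}(w_{n+2} + w_{n+3} + w_{n+4} + w_{n+5} + ν) + a/w_{n+3} = w_{n+1}(w_n + w_{n+1} + w_{n+2} + w_{n+3} + ν) + a/w_{n+2} holds (this is the relation obtained by eliminating the parameter b from (P.iv)). -/
section PIV

variable {K : Type*} [Field K] {a b ν : K} {w : ℤ → K} {n : ℤ}

/-- The recurrence (P.iv) at the single index `n`, relating `w n, …, w (n + 4)`. -/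
def IsPIVAt (a b ν : K) (w : ℤ → K) (n : ℤ) : Prop :=
  w (n + 4) * w (n + 3) * w (n + 2) + w (n + 2) * w (n + 1) * w n
    + 2 * w (n + 2) ^ 2 * (w (n + 3) + w (n + 1))
    + w (n + 2) * (w (n + 3) ^ 2 + w (n + 3) * w (n + 1) + w (n + 1) ^ 2)
    + w (n + 2) ^ 3
    + ν * w (n + 2) * (w (n + 3) + w (n + 2) + w (n + 1))
    + b * w (n + 2) + a = 0

/-- The value of `-b` obtained by dividing (P.iv) at `n` by `w (n + 2)`. Along a solution it does
not depend on `n`, and comparing consecutive values eliminates `b`. It is meaningful only for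
`w (n + 2) ≠ 0`. -/
def pivNegParam (a ν : K) (w : ℤ → K) (n : ℤ) : K :=
  w (n + 4) * w (n + 3) + w (n + 1) * w n + 2 * w (n + 2) * (w (n + 3) + w (n + 1))
    + (w (n + 3) ^ 2 + w (n + 3) * w (n + 1) + w (n + 1) ^ 2) + w (n + 2) ^ 2
    + ν * (w (n + 3) + w (n + 2) + w (n + 1)) + a / w (n + 2)

theorem isPIVAt_iff_pivNegParam_eq (hw : w (n + 2) ≠ 0) :
    IsPIVAt a b ν w n ↔ pivNegParam a ν w n = -b := by
  have div_mul : a / w (n + 2) * w (n + 2) = a := div_mul_cancel₀ a hw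
  rw [← mul_left_inj' hw, IsPIVAt, pivNegParam]
  constructor <;> intro h
  · linear_combination h + div_mul
  · linear_combination h - div_mul

theorem pivNegParam_succ_sub (a ν : K) (w : ℤ → K) (n : ℤ) :
    pivNegParam a ν w (n + 1) - pivNegParam a ν w n =
      (w (n + 4) * (w (n + 2) + w (n + 3) + w (n + 4) + w (n + 5) + ν) + a / w (n + 3))
        - (w (n + 1) * (w n + w (n + 1) + w (n + 2) + w (n + 3) + ν) + a / w (n + 2)) := by
  simp only [pivNegParam, add_assoc n, Int.reduceAdd]
  ring

theorem stmt18_general (hw₂ : w (n + 2) ≠ 0) (hw₃ : w (n + 3) ≠ 0)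
    (hn : IsPIVAt a b ν w n) (hn_succ : IsPIVAt a b ν w (n + 1)) :
    w (n + 4) * (w (n + 2) + w (n + 3) + w (n + 4) + w (n + 5) + ν) + a / w (n + 3)
      = w (n + 1) * (w n + w (n + 1) + w (n + 2) + w (n + 3) + ν) + a / w (n + 2) := by
  have hw_succ : w (n + 1 + 2) ≠ 0 := by rwa [add_assoc]
  rw [← sub_eq_zero, ← pivNegParam_succ_sub, (isPIVAt_iff_pivNegParam_eq hw_succ).mp hn_succ,
    (isPIVAt_iff_pivNegParam_eq hw₂).mp hn, sub_self]

end PIV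

theorem stmt18 (a b ν : ℂ) (w : ℤ → ℂ) (hw0 : ∀ n : ℤ, w n ≠ 0)
    (hpiv : ∀ n : ℤ,
      w (n + 4) * w (n + 3) * w (n + 2) + w (n + 2) * w (n + 1) * w n
        + 2 * w (n + 2) ^ 2 * (w (n + 3) + w (n + 1))
        + w (n + 2) * (w (n + 3) ^ 2 + w (n + 3) * w (n + 1) + w (n + 1) ^ 2)
        + w (n + 2) ^ 3
        + ν * w (n + 2) * (w (n + 3) + w (n + 2) + w (n + 1))
        + b * w (n + 2) + a = 0) :
    ∀ n : ℤ,
      w (n + 4) * (w (n + 2) + w (n + 3) + w (n + 4) + w (n + 5) + ν) + a / w (n + 3)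
        = w (n + 1) * (w n + w (n + 1) + w (n + 2) + w (n + 3) + ν) + a / w (n + 2) :=
  fun n => stmt18_general (hw0 (n + 2)) (hw0 (n + 3)) (hpiv n) (hpiv (n + 1))
end
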